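/- Let X be the punctured Möbius band with boundary circles C₁ and C₂. If f : X → X is a boundary-preserving map with f(C₁) ⊆ C₂ and f(C₂) ⊆ C₁, and both restrictions f|C₁ : C₁ → ∂X and f|C₂ : C₂ → ∂X are inessential, then f is boundary-homotopic to a map g : X → X having exactly one fixed point, and that fixed point lies in X ∖ ∂X. -/

import Mathlib

open Set

namespace PMB

/-- The square [0,1] × [−1,1] as a subspace of ℝ². -/
def Sq : Set (ℝ × ℝ) := Set.Icc 0 1 ×ˢ Set.Icc (-1) 1

/-- The identification (0,y) ∼ (1,−y) on the square. -/
def rel (p q : Sq) : Prop :=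
  (p : ℝ × ℝ) = (q : ℝ × ℝ) ∨
  ((p : ℝ × ℝ).1 = 0 ∧ (q : ℝ × ℝ).1 = 1 ∧ (p : ℝ × ℝ).2 = -(q : ℝ × ℝ).2) ∨
  ((p : ℝ × ℝ).1 = 1 ∧ (q : ℝ × ℝ).1 = 0 ∧ (q : ℝ × ℝ).2 = -(p : ℝ × ℝ).2)

/-- The Möbius band: the quotient of the square by the identification. -/
def M := Quot rel

instance : TopologicalSpace M := inferInstanceAs (TopologicalSpace (Quot rel))

/-- The quotient map. -/
def qm : Sq → M := Quot.mk rel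

/-- The open disc of radius 1/4 centred at (1/2, 0). -/
def Bdisc : Set (ℝ × ℝ) := Metric.ball (1/2, 0) (1/4)

/-- The circle of radius 1/4 centred at (1/2, 0). -/
def Scirc : Set (ℝ × ℝ) := Metric.sphere (1/2, 0) (1/4)

/-- The punctured Möbius band, as a subset of the Möbius band. -/
def Xset : Set M := {m | m ∉ qm '' {p : Sq | (p : ℝ × ℝ) ∈ Bdisc}}

/-- The punctured Möbius band as a topological space. -/
abbrev X : Type := ↥Xset

/-- The boundary circle of the Möbius band. -/
def C1 : Set X := {x | ∃ p : Sq, qm p = (x : M) ∧ ((p : ℝ × ℝ).2 = 1 ∨ (p : ℝ × ℝ).2 = -1)}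

/-- The boundary circle coming from the removed disc. -/
def C2 : Set X := {x | ∃ p : Sq, qm p = (x : M) ∧ (p : ℝ × ℝ) ∈ Scirc}

/-- The boundary of the punctured Möbius band. -/
def Bd : Set X := C1 ∪ C2

/-- A self-map of the punctured Möbius band is boundary-preserving if it sends ∂X into ∂X. -/
def BoundaryPreserving (f : C(X, X)) : Prop := MapsTo f Bd Bd

/-- Two self-maps are boundary-homotopic if there is a homotopy between them keeping
∂X inside ∂X at all times. -/
def BoundaryHomotopic (f g : C(X, X)) : Prop :=
  ∃ H : ContinuousMap.Homotopy f g, ∀ x : X, x ∈ Bd → ∀ t : unitInterval, H (t, x) ∈ Bd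

/-- A continuous map is inessential if it is homotopic to a constant map. -/
def Inessential {α β : Type*} [TopologicalSpace α] [TopologicalSpace β] (f : C(α, β)) : Prop :=
  ∃ b : β, ContinuousMap.Homotopic f (ContinuousMap.const α b)

/-- A continuous map is essential if it is not homotopic to a constant map. -/
def Essential {α β : Type*} [TopologicalSpace α] [TopologicalSpace β] (f : C(α, β)) : Prop :=
  ¬ Inessential f

/-- The restriction of a self-map of X to a subset `s` mapped into a subset `t`,
as a continuous map between the subspaces. -/
def restrictMap (f : C(X, X)) {s t : Set X} (h : MapsTo f s t) : C(s, t) :=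
  ⟨fun x => ⟨f x, h x.2⟩, Continuous.subtype_mk (f.continuous.comp continuous_subtype_val) _⟩

/-!
Since `f` is inessential on the boundary, it can be deformed to be constant on `C1` and on `C2`.
Collapsing each boundary circle of `X` to a point gives a projective plane, whose fundamental group
has order two, while `X` retracts onto a graph, whose fundamental group is torsion-free. Hence the
deformed map lifts to the universal cover of the graph, a tree, and it is homotopic to a constant
through maps which are constant on each boundary circle. Reading the time of this homotopy on a
collar of `∂X` shows that it is homotopic rel `∂X` to a composite `ψ ∘ r` with `r : X → ℝ` and
`ψ : ℝ → X`. The fixed points of `ψ ∘ r` correspond to those of `r ∘ ψ : ℝ → ℝ`, and `r` and `ψ`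
can be chosen so that there is only one.
-/

section NDR

variable {Y Z : Type*} [TopologicalSpace Y] [TopologicalSpace Z] {A : Set Y}

/-- The data making `A ⊆ Y` a neighbourhood deformation retract: a height function vanishing on `A`
and a homotopy rel `A` from the identity to a map which pushes the points of height `< 1` into
`A`. -/
structure NDRData (A : Set Y) where
  height : C(Y, unitInterval)
  push : C(unitInterval × Y, Y)
  height_eq_zero : ∀ a ∈ A, height a = 0
  push_zero : ∀ y, push (0, y) = y
  push_eq_self : ∀ s, ∀ a ∈ A, push (s, a) = a
  push_one_mem : ∀ y, height y ≠ 1 → push (1, y) ∈ A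

open Classical in
theorem NDRData.exists_homotopy_extension (N : NDRData A) (hA : IsClosed A) (f : C(Y, Z))
    {B : unitInterval × Y → Z} (hB : ContinuousOn B (univ ×ˢ A))
    (hB0 : ∀ a ∈ A, B (0, a) = f a) :
    ∃ H : C(unitInterval × Y, Z), (∀ y, H (0, y) = f (N.push (1, y))) ∧
      ∀ s, ∀ a ∈ A, H (s, a) = B (s, a) := by
  let H : unitInterval × Y → Z := fun q =>
    if N.push (1, q.2) ∈ A then B (q.1 * unitInterval.symm (N.height q.2), N.push (1, q.2))
    else f (N.push (1, q.2))
  have H_mem (q : unitInterval × Y) (hq : N.push (1, q.2) ∈ A) :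
      H q = B (q.1 * unitInterval.symm (N.height q.2), N.push (1, q.2)) := if_pos hq
  have H_eq (q : unitInterval × Y) (hq : q.1 = 0 ∨ N.height q.2 = 1) :
      H q = f (N.push (1, q.2)) := by
    by_cases hA' : N.push (1, q.2) ∈ A
    · have : q.1 * unitInterval.symm (N.height q.2) = 0 := by
        rcases hq with h | h <;> simp only [h, zero_mul, unitInterval.symm_one, mul_zero]
      rw [H_mem q hA', this, hB0 _ hA']
    · exact if_neg hA'
  have H_continuous : Continuous H := by
    have hon : ContinuousOn H {q | N.push (1, q.2) ∈ A} :=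
      (hB.comp (g := B) (f := fun q : unitInterval × Y =>
        (q.1 * unitInterval.symm (N.height q.2), N.push (1, q.2)))
        (by fun_prop) fun q hq => ⟨mem_univ _, hq⟩).congr H_mem
    have hon' : ContinuousOn H {q | N.height q.2 = 1} :=
      (Continuous.continuousOn (by fun_prop)).congr fun q hq => H_eq q (Or.inr hq)
    rw [← continuousOn_univ]
    refine (hon.union_of_isClosed hon' (hA.preimage (by fun_prop))
      (isClosed_eq (by fun_prop) continuous_const)).mono fun q _ => ?_
    exact (eq_or_ne (N.height q.2) 1).symm.imp (N.push_one_mem q.2) id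
  refine ⟨⟨H, H_continuous⟩, fun y => H_eq (0, y) (Or.inl rfl), fun s a ha => ?_⟩
  refine (H_mem (s, a) (by rwa [N.push_eq_self 1 a ha])).trans ?_
  simp only [N.push_eq_self 1 a ha, N.height_eq_zero a ha, unitInterval.symm_zero, mul_one]

theorem NDRData.exists_homotopicWith_mapsTo (N : NDRData A) (hA : IsClosed A) (f : C(Y, Z))
    {B : unitInterval × Y → Z} {S : Set Z} (hB : ContinuousOn B (univ ×ˢ A))
    (hB0 : ∀ a ∈ A, B (0, a) = f a) (hBS : ∀ s, ∀ a ∈ A, B (s, a) ∈ S) :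
    ∃ g : C(Y, Z), f.HomotopicWith g (fun k => MapsTo k A S) ∧ ∀ a ∈ A, g a = B (1, a) := by
  obtain ⟨H, H_zero, H_eq⟩ := N.exists_homotopy_extension hA f hB hB0
  refine ⟨⟨fun y => H (1, y), by fun_prop⟩, ?_, H_eq 1⟩
  have hpush : f.HomotopicWith ⟨fun y => f (N.push (1, y)), by fun_prop⟩
      (fun k => MapsTo k A S) :=
    ⟨⟨⟨⟨fun q => f (N.push q), by fun_prop⟩, fun y => congrArg f (N.push_zero y), fun _ => rfl⟩,
      fun s a ha => by
        simpa only [ContinuousMap.coe_mk, N.push_eq_self s a ha, hB0 a ha] using hBS 0 a ha⟩⟩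
  exact hpush.trans ⟨⟨⟨H, H_zero, fun _ => rfl⟩, fun s a ha => by
    simpa only [ContinuousMap.toFun_eq_coe, ContinuousMap.coe_mk, H_eq s a ha] using hBS s a ha⟩⟩

theorem NDRData.homotopicRel_of_homotopy (N : NDRData A) (f : C(Y, Z)) (K : C(unitInterval × Y, Z))
    (hK : ∀ y, K (0, y) = f y) :
    f.HomotopicRel ⟨fun y => K (N.height y, N.push (1, y)), by fun_prop⟩ A :=
  ⟨⟨⟨⟨fun q => K (q.1 * N.height q.2, N.push q), by fun_prop⟩,
    fun y => by simp only [zero_mul, N.push_zero, hK],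
    fun y => by simp only [one_mul, ContinuousMap.coe_mk]⟩,
    fun s a ha => by
      simp only [ContinuousMap.coe_mk, N.height_eq_zero a ha, mul_zero, N.push_eq_self s a ha, hK]⟩⟩

theorem homotopicWith_mapsTo_of_homotopicRel {f g : C(Y, Z)} {S : Set Z} (h : f.HomotopicRel g A)
    (hf : MapsTo f A S) : f.HomotopicWith g (fun k => MapsTo k A S) := by
  obtain ⟨H⟩ := h
  exact ⟨⟨H.toHomotopy, fun t a ha => (H.eq_fst t ha).symm ▸ hf ha⟩⟩

open Classical in
theorem exists_continuousOn_union {A' : Set Y} (hA : IsClosed A) (hA' : IsClosed A')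
    (hdisj : Disjoint A A') [Nonempty Z] (H : C(unitInterval × A, Z))
    (H' : C(unitInterval × A', Z)) :
    ∃ K : unitInterval × Y → Z, ContinuousOn K (univ ×ˢ (A ∪ A')) ∧
      (∀ s, ∀ a : A, K (s, a) = H (s, a)) ∧ ∀ s, ∀ a : A', K (s, a) = H' (s, a) := by
  let K (q : unitInterval × Y) : Z :=
    if h : q.2 ∈ A then H (q.1, ⟨q.2, h⟩) else
      if h : q.2 ∈ A' then H' (q.1, ⟨q.2, h⟩) else Classical.arbitrary Z
  have K_left (s) (a : A) : K (s, a) = H (s, a) := dif_pos a.2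
  have K_right (s) (a : A') : K (s, a) = H' (s, a) :=
    (dif_neg (hdisj.notMem_of_mem_right a.2)).trans (dif_pos a.2)
  refine ⟨K, ?_, K_left, K_right⟩
  rw [prod_union]
  refine ContinuousOn.union_of_isClosed ?_ ?_ (isClosed_univ.prod hA) (isClosed_univ.prod hA') <;>
    rw [continuousOn_iff_continuous_domRestrict]
  · refine Continuous.congr (f := fun q : (univ ×ˢ A : Set (unitInterval × Y)) =>
      H (q.1.1, ⟨q.1.2, q.2.2⟩)) (by fun_prop) fun q => ?_
    exact (K_left q.1.1 ⟨q.1.2, q.2.2⟩).symm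
  · refine Continuous.congr (f := fun q : (univ ×ˢ A' : Set (unitInterval × Y)) =>
      H' (q.1.1, ⟨q.1.2, q.2.2⟩)) (by fun_prop) fun q => ?_
    exact (K_right q.1.1 ⟨q.1.2, q.2.2⟩).symm

theorem isClopen_preimage_coe_of_subset_union {A' S : Set Y} (hA : IsClosed A) (hA' : IsClosed A')
    (hdisj : Disjoint A A') (hS : S ⊆ A ∪ A') : IsClopen ((↑) ⁻¹' A : Set S) := by
  refine ⟨hA.preimage continuous_subtype_val, ?_⟩
  have hcompl : ((↑) ⁻¹' A : Set S) = ((↑) ⁻¹' A')ᶜ := ext fun y =>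
    ⟨fun h => hdisj.notMem_of_mem_left h, fun h => (hS y.2).resolve_right h⟩
  exact hcompl ▸ (hA'.preimage continuous_subtype_val).isOpen_compl

theorem mem_of_homotopic_const {f : C(Y, Z)} {b : Z} {S : Set Z}
    (h : f.Homotopic (ContinuousMap.const Y b)) (hS : IsClopen S) {y : Y} (hy : f y ∈ S) :
    b ∈ S := by
  obtain ⟨H⟩ := h
  exact hS.connectedComponent_subset hy (pathComponent_subset_component _ ⟨H.evalAt y⟩)

end NDR

/-! ### The Cayley tree of a free group -/

section Letters

variable {ι : Type*}

/-- The letter inverse to `s`, where `(i, true)` stands for a generator and `(i, false)` for its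
inverse, as in `FreeGroup`. -/
def opp (s : ι × Bool) : ι × Bool := (s.1, !s.2)

/-- The element of the free group given by a single letter. -/
def letter (s : ι × Bool) : FreeGroup ι := FreeGroup.mk [s]

@[simp] theorem opp_opp (s : ι × Bool) : opp (opp s) = s := by simp [opp]

theorem opp_injective : Function.Injective (opp : ι × Bool → ι × Bool) :=
  (show Function.Involutive (opp : ι × Bool → ι × Bool) from opp_opp).injective

theorem opp_ne (s : ι × Bool) : opp s ≠ s := by simp [opp, Prod.ext_iff]

theorem letter_opp (s : ι × Bool) : letter (opp s) = (letter s)⁻¹ := by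
  simp [letter, opp, FreeGroup.inv_mk, FreeGroup.invRev]

@[simp] theorem letter_opp_mul_letter_mul (s : ι × Bool) (g : FreeGroup ι) :
    letter (opp s) * (letter s * g) = g := by
  rw [letter_opp, inv_mul_cancel_left]

theorem mk_cons_eq_letter_mul (s : ι × Bool) (L : List (ι × Bool)) :
    FreeGroup.mk (s :: L) = letter s * FreeGroup.mk L := by
  simp [letter, FreeGroup.mul_mk]

variable [DecidableEq ι]

/-- In the Cayley graph with edges joining `g` to `letter s * g`, the edge at `g` labelled `s` is
the first one on the way from `g` to the root `1`. -/
def PointsToRoot (g : FreeGroup ι) (s : ι × Bool) : Prop := g.toWord.head? = some (opp s)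

instance (g : FreeGroup ι) (s : ι × Bool) : Decidable (PointsToRoot g s) :=
  inferInstanceAs (Decidable (_ = _))

theorem not_pointsToRoot_one (s : ι × Bool) : ¬ PointsToRoot 1 s := by simp [PointsToRoot]

theorem PointsToRoot.unique {g : FreeGroup ι} {s t : ι × Bool} (hs : PointsToRoot g s)
    (ht : PointsToRoot g t) : s = t :=
  opp_injective (Option.some_injective _ (hs.symm.trans ht))

theorem toWord_letter_mul {g : FreeGroup ι} {s : ι × Bool} (h : ¬ PointsToRoot g s) :
    (letter s * g).toWord = s :: g.toWord := by
  have hreduced : FreeGroup.IsReduced (s :: g.toWord) := by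
    refine List.IsChain.cons FreeGroup.isReduced_toWord fun t ht hst => ?_
    by_contra hne
    exact h (ht.trans (congrArg some (Prod.ext hst.symm (Bool.eq_not_of_ne (Ne.symm hne)))))
  rw [letter, FreeGroup.toWord_mul, FreeGroup.toWord_mk, FreeGroup.reduce_singleton]
  exact hreduced.reduce_eq

theorem pointsToRoot_letter_mul {g : FreeGroup ι} {s : ι × Bool} (h : ¬ PointsToRoot g s) :
    PointsToRoot (letter s * g) (opp s) := by
  simp [PointsToRoot, toWord_letter_mul h]

theorem PointsToRoot.toWord_eq {g : FreeGroup ι} {s : ι × Bool} (h : PointsToRoot g s) :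
    g.toWord = opp s :: (letter s * g).toWord := by
  obtain ⟨L, hL⟩ := List.head?_eq_some_iff.1 h
  have hreduced : FreeGroup.IsReduced L :=
    FreeGroup.isReduced_toWord.infix (hL ▸ (List.suffix_cons _ L).isInfix)
  have hg : letter s * g = FreeGroup.mk L := by
    rw [← FreeGroup.mk_toWord (x := g), hL, mk_cons_eq_letter_mul, letter_opp, mul_inv_cancel_left]
  rw [hg, FreeGroup.toWord_mk, hreduced.reduce_eq, hL]

theorem PointsToRoot.norm_eq {g : FreeGroup ι} {s : ι × Bool} (h : PointsToRoot g s) :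
    g.norm = (letter s * g).norm + 1 :=
  congrArg List.length h.toWord_eq

theorem PointsToRoot.not_pointsToRoot {g : FreeGroup ι} {s : ι × Bool} (h : PointsToRoot g s) :
    ¬ PointsToRoot (letter s * g) (opp s) := by
  intro h'
  have := h.norm_eq
  have := h'.norm_eq
  rw [letter_opp_mul_letter_mul] at this
  omega

end Letters

/-- The geometric realization of the Cayley tree of the free group on `ι`, with an edge of length
one from `g` to `letter s * g` for every letter `s`. A point is recorded by its nearest-point
projections to the edges: `coord g s` is the distance from `g` of the projection to the edge at `g`
labelled `s`. The last condition excludes the ends of the tree. -/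
@[ext]
structure CayleyTree (ι : Type*) where
  coord : FreeGroup ι → ι × Bool → ℝ
  coord_nonneg : ∀ g s, 0 ≤ coord g s
  coord_add_coord_opp : ∀ g s, coord g s + coord (letter s * g) (opp s) = 1
  coord_eq_zero_or : ∀ g s t, s ≠ t → coord g s = 0 ∨ coord g t = 0
  exists_coord_lt_one : ∃ g, ∀ s, coord g s < 1

namespace CayleyTree

section Basic

variable {ι : Type*}

instance : TopologicalSpace (CayleyTree ι) := .induced coord inferInstance

@[fun_prop]
theorem continuous_coord (g : FreeGroup ι) (s : ι × Bool) :
    Continuous fun ξ : CayleyTree ι => ξ.coord g s :=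
  (continuous_apply_apply g s).comp continuous_induced_dom

theorem continuous_of_coord {Y : Type*} [TopologicalSpace Y] {f : Y → CayleyTree ι}
    (hf : ∀ g s, Continuous fun y => (f y).coord g s) : Continuous f :=
  continuous_induced_rng.2 (continuous_pi fun g => continuous_pi fun s => hf g s)

theorem coord_le_one (ξ : CayleyTree ι) (g : FreeGroup ι) (s : ι × Bool) : ξ.coord g s ≤ 1 := by
  linarith [ξ.coord_add_coord_opp g s, ξ.coord_nonneg (letter s * g) (opp s)]

theorem coord_eq_zero (ξ : CayleyTree ι) {g : FreeGroup ι} {s t : ι × Bool}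
    (hs : 0 < ξ.coord g s) (hst : t ≠ s) : ξ.coord g t = 0 :=
  (ξ.coord_eq_zero_or g t s hst).resolve_right hs.ne'

theorem coord_mk_cons (ξ : CayleyTree ι) {g : FreeGroup ι} (hg : ∀ s, ξ.coord g s < 1)
    (L : List (ι × Bool)) (s : ι × Bool) (hL : FreeGroup.IsReduced (s :: L)) :
    0 < ξ.coord (FreeGroup.mk (s :: L) * g) (opp s) ∧
      (L ≠ [] → ξ.coord (FreeGroup.mk (s :: L) * g) (opp s) = 1) := by
  induction L generalizing s with
  | nil =>
    have : 0 < ξ.coord (letter s * g) (opp s) := by linarith [ξ.coord_add_coord_opp g s, hg s]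
    exact ⟨this, fun h => absurd rfl h⟩
  | cons t L ih =>
    rw [FreeGroup.isReduced_cons_cons] at hL
    have hne : s ≠ opp t := by
      rintro rfl
      simp [opp] at hL
    have hzero := ξ.coord_eq_zero (ih t hL.2).1 hne
    have hone := ξ.coord_add_coord_opp (FreeGroup.mk (t :: L) * g) s
    rw [hzero, zero_add, ← mul_assoc, ← mk_cons_eq_letter_mul] at hone
    exact ⟨hone ▸ one_pos, fun _ => hone⟩

/-- The letter `s` is the last one on the way from `g` to `g'`. -/
theorem exists_forall_coord_opp_pos {g g' : FreeGroup ι} (hne : g' ≠ g) :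
    ∃ s, ∀ ξ : CayleyTree ι, (∀ t, ξ.coord g t < 1) →
      0 < ξ.coord g' (opp s) ∧ (ξ.coord g' (opp s) = 1 ∨ g' = letter s * g) := by
  classical
  obtain ⟨L, hL⟩ : ∃ L, (g' * g⁻¹).toWord = L := ⟨_, rfl⟩
  have hg' : g' = FreeGroup.mk L * g := by
    rw [← hL, FreeGroup.mk_toWord, inv_mul_cancel_right]
  have hreduced : FreeGroup.IsReduced L := hL ▸ FreeGroup.isReduced_toWord
  cases L with
  | nil => exact absurd (hg'.trans (one_mul g)) hne
  | cons s L =>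
    refine ⟨s, fun ξ hξ => ?_⟩
    obtain ⟨hpos, hone⟩ := ξ.coord_mk_cons hξ L s hreduced
    rw [← hg'] at hpos hone
    refine ⟨hpos, (eq_or_ne L []).symm.imp hone ?_⟩
    rintro rfl
    exact hg'

theorem eq_of_coord_eq_zero {ξ η : CayleyTree ι} {g : FreeGroup ι} (hξ : ∀ s, ξ.coord g s = 0)
    (hη : ∀ s, η.coord g s = 0) : ξ = η := by
  ext g' t
  rcases eq_or_ne g' g with rfl | hne
  · rw [hξ, hη]
  obtain ⟨s, hs⟩ := exists_forall_coord_opp_pos hne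
  have coord_opp (ζ : CayleyTree ι) (hζ : ∀ u, ζ.coord g u = 0) : ζ.coord g' (opp s) = 1 := by
    rcases (hs ζ fun u => (hζ u).trans_lt one_pos).2 with h | rfl
    · exact h
    · simpa only [hζ, zero_add] using ζ.coord_add_coord_opp g s
  rcases eq_or_ne t (opp s) with rfl | ht
  · rw [coord_opp ξ hξ, coord_opp η hη]
  · rw [ξ.coord_eq_zero (by rw [coord_opp ξ hξ]; exact one_pos) ht,
      η.coord_eq_zero (by rw [coord_opp η hη]; exact one_pos) ht]

end Basic

section Action

variable {ι : Type*}

/-- The free group acts by right translation of the coordinates; left multiplication is used up by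
the edges. -/
instance : MulAction (FreeGroup ι) (CayleyTree ι) where
  smul γ ξ :=
    { coord := fun g s => ξ.coord (g * γ) s
      coord_nonneg := fun g s => ξ.coord_nonneg _ s
      coord_add_coord_opp := fun g s => by
        simpa only [mul_assoc] using ξ.coord_add_coord_opp (g * γ) s
      coord_eq_zero_or := fun g s t => ξ.coord_eq_zero_or _ s t
      exists_coord_lt_one :=
        let ⟨g, hg⟩ := ξ.exists_coord_lt_one
        ⟨g * γ⁻¹, by simpa only [inv_mul_cancel_right] using hg⟩ }
  one_smul ξ := CayleyTree.ext <| funext₂ fun g s => congrArg (ξ.coord · s) (mul_one g)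
  mul_smul γ δ ξ := CayleyTree.ext <| funext₂ fun g s =>
    congrArg (ξ.coord · s) (mul_assoc g γ δ).symm

theorem coord_smul (γ : FreeGroup ι) (ξ : CayleyTree ι) (g : FreeGroup ι) (s : ι × Bool) :
    (γ • ξ).coord g s = ξ.coord (g * γ) s := rfl

instance : ContinuousConstSMul (FreeGroup ι) (CayleyTree ι) where
  continuous_const_smul γ := continuous_of_coord fun g s => continuous_coord (g * γ) s

theorem eq_one_of_coord_lt_half {γ g : FreeGroup ι} {ξ : CayleyTree ι}
    (h : ∀ s, ξ.coord g s < 1 / 2) (hγ : ∀ s, (γ • ξ).coord g s < 1 / 2) : γ = 1 := by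
  by_contra hne
  obtain ⟨s, hs⟩ := exists_forall_coord_opp_pos (g := g) (g' := g * γ) (by simpa using hne)
  have hsmall := hγ (opp s)
  rw [coord_smul] at hsmall
  rcases (hs ξ fun t => (h t).trans (by norm_num)).2 with hone | hadj
  · linarith
  · linarith [h s, hadj ▸ ξ.coord_add_coord_opp g s]

theorem eq_one_of_coord_mem_Ioo {γ g : FreeGroup ι} {s : ι × Bool} {ξ : CayleyTree ι}
    (h : ξ.coord g s ∈ Ioo 0 1) (hγ : (γ • ξ).coord g s ∈ Ioo 0 1) : γ = 1 := by
  by_contra hne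
  rw [coord_smul] at hγ
  have hlt (t : ι × Bool) : ξ.coord g t < 1 := by
    rcases eq_or_ne t s with rfl | ht
    · exact h.2
    · exact (ξ.coord_eq_zero h.1 ht).trans_lt one_pos
  obtain ⟨t, ht⟩ := exists_forall_coord_opp_pos (g := g) (g' := g * γ) (by simpa using hne)
  obtain ⟨hpos, hor⟩ := ht ξ hlt
  obtain rfl : s = opp t := by
    by_contra hst
    exact hγ.1.ne' (ξ.coord_eq_zero hpos hst)
  rcases hor with hone | hadj
  · exact hγ.2.ne hone
  · have := ξ.coord_eq_zero h.1 (opp_ne t).symm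
    linarith [hγ.2, hadj ▸ ξ.coord_add_coord_opp g t]

variable (ι) in
/-- The quotient of the Cayley tree by the free group: a wedge of circles indexed by `ι`. -/
abbrev Rose : Type _ := MulAction.orbitRel.Quotient (FreeGroup ι) (CayleyTree ι)

/-- The universal covering of the rose. -/
def toRose : CayleyTree ι → Rose ι := Quotient.mk _

theorem toRose_eq_iff {ξ η : CayleyTree ι} :
    toRose ξ = toRose η ↔ ∃ γ : FreeGroup ι, γ • η = ξ :=
  Quotient.eq (r := MulAction.orbitRel _ _)

theorem isOpen_setOf_forall_coord_lt [Finite ι] (g : FreeGroup ι) (r : ℝ) :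
    IsOpen {ξ : CayleyTree ι | ∀ s, ξ.coord g s < r} := by
  simp only [ofPred_forall]
  exact isOpen_iInter_of_finite fun s => isOpen_lt (continuous_coord g s) continuous_const

theorem isQuotientCoveringMap_toRose [Finite ι] :
    IsQuotientCoveringMap (toRose : CayleyTree ι → Rose ι) (FreeGroup ι) where
  toIsQuotientMap := isQuotientMap_quot_mk
  continuous_const_smul := continuous_const_smul
  apply_eq_iff_mem_orbit := toRose_eq_iff
  disjoint ξ := by
    obtain ⟨g, hg⟩ := ξ.exists_coord_lt_one
    by_cases hstar : ∀ s, ξ.coord g s < 1 / 2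
    · refine ⟨_, (isOpen_setOf_forall_coord_lt g (1 / 2)).mem_nhds hstar, ?_⟩
      rintro γ ⟨_, ⟨η, hη, rfl⟩, hγη⟩
      exact eq_one_of_coord_lt_half hη hγη
    · push Not at hstar
      obtain ⟨s, hs⟩ := hstar
      have hmem : ξ.coord g s ∈ Ioo (0 : ℝ) 1 := ⟨by linarith, hg s⟩
      refine ⟨_, (isOpen_Ioo.preimage (continuous_coord g s)).mem_nhds hmem, ?_⟩
      rintro γ ⟨_, ⟨η, hη, rfl⟩, hγη⟩
      exact eq_one_of_coord_mem_Ioo hη hγη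

end Action

section Outward

variable {ι : Type*} [DecidableEq ι]

/-- Extend coordinates given on the edges leading away from the root to all edges. -/
def extendOutward (c : FreeGroup ι → ι × Bool → ℝ) (g : FreeGroup ι) (s : ι × Bool) : ℝ :=
  if PointsToRoot g s then 1 - c (letter s * g) (opp s) else c g s

variable {c : FreeGroup ι → ι × Bool → ℝ} {g : FreeGroup ι} {s : ι × Bool}

theorem extendOutward_of_pointsToRoot (h : PointsToRoot g s) :
    extendOutward c g s = 1 - c (letter s * g) (opp s) := if_pos h

theorem extendOutward_of_not_pointsToRoot (h : ¬ PointsToRoot g s) :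
    extendOutward c g s = c g s := if_neg h

/-- The point of the tree with prescribed coordinates on the edges leading away from the root. -/
def ofOutward (c : FreeGroup ι → ι × Bool → ℝ) (hc : ∀ g s, c g s ∈ Icc 0 1)
    (hsiblings : ∀ g s t, s ≠ t → ¬ PointsToRoot g s → ¬ PointsToRoot g t → c g s = 0 ∨ c g t = 0)
    (hparent : ∀ g s t, PointsToRoot g s → ¬ PointsToRoot g t →
      c (letter s * g) (opp s) = 1 ∨ c g t = 0)
    (hexists : ∃ g, ∀ s, extendOutward c g s < 1) : CayleyTree ι where
  coord := extendOutward c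
  coord_nonneg g s := by
    unfold extendOutward
    split_ifs
    · exact sub_nonneg.2 (hc _ _).2
    · exact (hc _ _).1
  coord_add_coord_opp g s := by
    by_cases h : PointsToRoot g s
    · rw [extendOutward_of_pointsToRoot h, extendOutward_of_not_pointsToRoot h.not_pointsToRoot,
        sub_add_cancel]
    · rw [extendOutward_of_not_pointsToRoot h,
        extendOutward_of_pointsToRoot (pointsToRoot_letter_mul h), letter_opp_mul_letter_mul,
        opp_opp, add_sub_cancel]
  coord_eq_zero_or := by
    have of_pointsToRoot {g s t} (hs : PointsToRoot g s) (hst : s ≠ t) :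
        extendOutward c g s = 0 ∨ extendOutward c g t = 0 := by
      have ht : ¬ PointsToRoot g t := fun ht => hst (hs.unique ht)
      rw [extendOutward_of_pointsToRoot hs, extendOutward_of_not_pointsToRoot ht]
      exact (hparent g s t hs ht).imp_left fun h => by rw [h, sub_self]
    intro g s t hst
    by_cases hs : PointsToRoot g s
    · exact of_pointsToRoot hs hst
    by_cases ht : PointsToRoot g t
    · exact (of_pointsToRoot ht hst.symm).symm
    rw [extendOutward_of_not_pointsToRoot hs, extendOutward_of_not_pointsToRoot ht]
    exact hsiblings g s t hst hs ht
  exists_coord_lt_one := hexists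

theorem extendOutward_coord (ξ : CayleyTree ι) : extendOutward ξ.coord = ξ.coord := by
  ext g s
  unfold extendOutward
  split_ifs
  · linarith [ξ.coord_add_coord_opp g s]
  · rfl

theorem continuous_extendOutward {Y : Type*} [TopologicalSpace Y]
    {c : Y → FreeGroup ι → ι × Bool → ℝ} (hc : ∀ g s, Continuous fun y => c y g s)
    (g : FreeGroup ι) (s : ι × Bool) : Continuous fun y => extendOutward (c y) g s := by
  unfold extendOutward
  split_ifs
  · exact continuous_const.sub (hc _ _)
  · exact hc g s

variable (ι) in
/-- The vertex `1` of the tree. -/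
def root : CayleyTree ι :=
  ofOutward (fun _ _ => 0) (fun _ _ => ⟨le_rfl, zero_le_one⟩) (fun _ _ _ _ _ _ => Or.inl rfl)
    (fun _ _ _ _ _ => Or.inr rfl)
    ⟨1, fun s => by simp [extendOutward_of_not_pointsToRoot (not_pointsToRoot_one s)]⟩

theorem coord_root_one (s : ι × Bool) : (root ι).coord 1 s = 0 :=
  extendOutward_of_not_pointsToRoot (not_pointsToRoot_one s)

/-- The outward coordinates of the point at distance `t` from the root on the edge from the root to
`letter a`. -/
def edgeCoord (a : ι × Bool) (t : ℝ) (g : FreeGroup ι) (s : ι × Bool) : ℝ :=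
  if g = 1 ∧ s = a then t else 0

theorem edgeCoord_of_ne_one {a : ι × Bool} {t : ℝ} (hg : g ≠ 1) (s : ι × Bool) :
    edgeCoord a t g s = 0 := if_neg fun h => hg h.1

theorem edgeCoord_of_ne {a : ι × Bool} {t : ℝ} (g : FreeGroup ι) (hs : s ≠ a) :
    edgeCoord a t g s = 0 := if_neg fun h => hs h.2

theorem extendOutward_edgeCoord_one_left (a : ι × Bool) (t : ℝ) (s : ι × Bool) :
    extendOutward (edgeCoord a t) 1 s = if s = a then t else 0 := by
  rw [extendOutward_of_not_pointsToRoot (not_pointsToRoot_one s)]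
  simp only [edgeCoord, true_and]

theorem pointsToRoot_letter_iff {a s : ι × Bool} : PointsToRoot (letter a) s ↔ s = opp a := by
  have h : PointsToRoot (letter a) (opp a) := by
    simpa only [mul_one] using pointsToRoot_letter_mul (not_pointsToRoot_one a)
  exact ⟨fun hs => hs.unique h, fun hs => hs ▸ h⟩

theorem extendOutward_edgeCoord_one_right (a s : ι × Bool) :
    extendOutward (edgeCoord a 1) (letter a) s = 0 := by
  by_cases hs : s = opp a
  · subst hs
    rw [extendOutward_of_pointsToRoot (pointsToRoot_letter_iff.2 rfl), opp_opp, letter_opp,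
      inv_mul_cancel, edgeCoord, if_pos ⟨rfl, rfl⟩, sub_self]
  · rw [extendOutward_of_not_pointsToRoot (pointsToRoot_letter_iff.not.2 hs)]
    refine edgeCoord_of_ne_one (fun h => ?_) s
    have := not_pointsToRoot_one (opp a)
    rw [← h, pointsToRoot_letter_iff] at this
    exact this rfl

/-- The edge from the root to the vertex `letter a`. -/
def edge (a : ι × Bool) (t : unitInterval) : CayleyTree ι :=
  ofOutward (edgeCoord a t)
    (fun g s => by
      unfold edgeCoord
      split_ifs
      · exact t.2
      · exact ⟨le_rfl, zero_le_one⟩)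
    (fun g s s' hs _ _ => by
      by_cases h : s = a
      · exact Or.inr (edgeCoord_of_ne g (h ▸ hs.symm))
      · exact Or.inl (edgeCoord_of_ne g h))
    (fun g s s' hs _ => Or.inr <| edgeCoord_of_ne_one (by
      rintro rfl
      exact not_pointsToRoot_one s hs) s')
    (by
      rcases t.2.2.lt_or_eq with ht | ht
      · refine ⟨1, fun s => ?_⟩
        rw [extendOutward_edgeCoord_one_left]
        split_ifs
        exacts [ht, one_pos]
      · exact ⟨letter a, fun s => by rw [ht, extendOutward_edgeCoord_one_right]; exact one_pos⟩)

theorem continuous_edge (a : ι × Bool) : Continuous (edge a) := by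
  refine continuous_of_coord (continuous_extendOutward fun g s => ?_)
  unfold edgeCoord
  split_ifs <;> fun_prop

theorem coord_edge_one (a : ι × Bool) (t : unitInterval) (s : ι × Bool) :
    (edge a t).coord 1 s = if s = a then (t : ℝ) else 0 :=
  extendOutward_edgeCoord_one_left a t s

theorem coord_edge_letter (a s : ι × Bool) : (edge a 1).coord (letter a) s = 0 :=
  extendOutward_edgeCoord_one_right a s

theorem edge_zero (a : ι × Bool) : edge a 0 = root ι :=
  eq_of_coord_eq_zero (g := 1) (fun s => by simp [coord_edge_one]) coord_root_one

theorem edge_one (a : ι × Bool) : edge a 1 = (letter a)⁻¹ • root ι :=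
  eq_of_coord_eq_zero (coord_edge_letter a) fun s => by
    rw [coord_smul, mul_inv_cancel, coord_root_one]

theorem toRose_edge_one (a : ι × Bool) : toRose (edge a 1) = toRose (root ι) :=
  toRose_eq_iff.2 ⟨_, (edge_one a).symm⟩

end Outward

section Contraction

/-- The time schedule of the contraction of the tree: the factor for the edges at distance `n` from
the root drops from `1` to `0` while `s` runs through `[1 / (n + 2), 1 / (n + 1)]`. -/
noncomputable def collapseTime (n : ℕ) (s : ℝ) : ℝ := max 0 (min 1 ((n + 2) * (1 - (n + 1) * s)))

theorem collapseTime_mem_Icc (n : ℕ) (s : ℝ) : collapseTime n s ∈ Icc 0 1 :=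
  ⟨le_max_left _ _, max_le zero_le_one (min_le_left _ _)⟩

theorem collapseTime_zero (n : ℕ) : collapseTime n 0 = 1 := by
  have : (1 : ℝ) ≤ (n + 2) * (1 - (n + 1) * 0) := by linarith [n.cast_nonneg (α := ℝ)]
  rw [collapseTime, min_eq_left this, max_eq_right zero_le_one]

theorem collapseTime_one (n : ℕ) : collapseTime n 1 = 0 :=
  max_eq_left <| (min_le_right _ _).trans (by nlinarith [n.cast_nonneg (α := ℝ)])

theorem collapseTime_eq_one_of_succ_ne_zero {n : ℕ} {s : ℝ} (h : collapseTime (n + 1) s ≠ 0) :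
    collapseTime n s = 1 := by
  have := n.cast_nonneg (α := ℝ)
  have hs : 0 < 1 - ((n : ℝ) + 2) * s := by
    by_contra! hle
    refine h (max_eq_left ((min_le_right _ _).trans ?_))
    push_cast
    nlinarith
  have hge : (1 : ℝ) ≤ (n + 2) * (1 - (n + 1) * s) := by nlinarith
  rw [collapseTime, min_eq_left hge, max_eq_right zero_le_one]

@[fun_prop]
theorem continuous_collapseTime (n : ℕ) : Continuous (collapseTime n) := by
  unfold collapseTime
  fun_prop

variable {ι : Type*} [DecidableEq ι]

/-- The outward coordinates of the contraction of the tree to its root. -/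
noncomputable def contractCoord (s : ℝ) (ξ : CayleyTree ι) (g : FreeGroup ι) (t : ι × Bool) : ℝ :=
  min (ξ.coord g t) (collapseTime g.norm s)

theorem contractCoord_eq_zero {s : ℝ} {ξ : CayleyTree ι} {g : FreeGroup ι} {t : ι × Bool}
    (h : ξ.coord g t = 0) : contractCoord s ξ g t = 0 := by
  rw [contractCoord, h, min_eq_left (collapseTime_mem_Icc _ _).1]

theorem exists_extendOutward_contractCoord_lt_one (s : ℝ) (ξ : CayleyTree ι) :
    ∃ g, ∀ t, extendOutward (contractCoord s ξ) g t < 1 := by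
  suffices descend : ∀ (n : ℕ) (g : FreeGroup ι), g.norm = n →
      (∀ t, PointsToRoot g t → ξ.coord g t < 1) →
      (∀ t, ¬ PointsToRoot g t → contractCoord s ξ g t < 1) →
      ∃ g, ∀ t, extendOutward (contractCoord s ξ) g t < 1 by
    obtain ⟨g, hg⟩ := ξ.exists_coord_lt_one
    exact descend _ g rfl (fun t _ => hg t) fun t _ => (min_le_left _ _).trans_lt (hg t)
  intro n
  induction n with
  | zero =>
    intro g hg _ hout
    obtain rfl := FreeGroup.norm_eq_zero.1 hg
    exact ⟨1, fun t => (extendOutward_of_not_pointsToRoot (not_pointsToRoot_one t)).trans_lt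
      (hout t (not_pointsToRoot_one t))⟩
  | succ n ih =>
    intro g hg hin hout
    by_cases hpos : ∀ t, PointsToRoot g t → 0 < contractCoord s ξ (letter t * g) (opp t)
    · refine ⟨g, fun t => ?_⟩
      by_cases ht : PointsToRoot g t
      · rw [extendOutward_of_pointsToRoot ht]
        linarith [hpos t ht]
      · exact (extendOutward_of_not_pointsToRoot ht).trans_lt (hout t ht)
    push Not at hpos
    obtain ⟨t, ht, hle⟩ := hpos
    have hcoord : 0 < ξ.coord (letter t * g) (opp t) := by
      linarith [ξ.coord_add_coord_opp g t, hin t ht]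
    have hcollapsed : collapseTime (letter t * g).norm s ≤ 0 :=
      (min_le_iff.1 hle).resolve_left hcoord.not_ge
    refine ih (letter t * g) (by have := ht.norm_eq; omega) (fun u hu => ?_) fun u _ =>
      (min_le_right _ _).trans_lt (hcollapsed.trans_lt one_pos)
    have hne : u ≠ opp t := fun h => ht.not_pointsToRoot (h ▸ hu)
    exact (ξ.coord_eq_zero hcoord hne).trans_lt one_pos

/-- The contraction of the tree to its root, collapsing the outermost edges first. -/
noncomputable def contract (s : ℝ) (ξ : CayleyTree ι) : CayleyTree ι :=
  ofOutward (contractCoord s ξ)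
    (fun g t => ⟨le_min (ξ.coord_nonneg g t) (collapseTime_mem_Icc _ _).1,
      (min_le_left _ _).trans (ξ.coord_le_one g t)⟩)
    (fun g t u htu _ _ =>
      (ξ.coord_eq_zero_or g t u htu).imp contractCoord_eq_zero contractCoord_eq_zero)
    (fun g t u ht hu => by
      rcases ξ.coord_eq_zero_or g t u (fun h => hu (h ▸ ht)) with h | h
      · rcases eq_or_ne (collapseTime g.norm s) 0 with hg | hg
        · exact Or.inr (by rw [contractCoord, hg, min_eq_right (ξ.coord_nonneg g u)])
        · rw [ht.norm_eq] at hg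
          left
          rw [contractCoord, collapseTime_eq_one_of_succ_ne_zero hg,
            min_eq_left (ξ.coord_le_one _ _)]
          linarith [ξ.coord_add_coord_opp g t]
      · exact Or.inr (contractCoord_eq_zero h))
    (exists_extendOutward_contractCoord_lt_one s ξ)

theorem continuous_contract :
    Continuous fun p : unitInterval × CayleyTree ι => contract (p.1 : ℝ) p.2 := by
  refine continuous_of_coord (continuous_extendOutward fun g t => ?_)
  unfold contractCoord
  fun_prop

theorem contract_zero (ξ : CayleyTree ι) : contract 0 ξ = ξ := by
  have hcoord : contractCoord 0 ξ = ξ.coord := funext₂ fun g t => by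
    rw [contractCoord, collapseTime_zero, min_eq_left (ξ.coord_le_one g t)]
  exact CayleyTree.ext ((congrArg extendOutward hcoord).trans ξ.extendOutward_coord)

theorem contract_one (ξ : CayleyTree ι) : contract 1 ξ = root ι := by
  have hcoord : contractCoord 1 ξ = fun _ _ => 0 := funext₂ fun g t => by
    rw [contractCoord, collapseTime_one, min_eq_right (ξ.coord_nonneg g t)]
  exact CayleyTree.ext (congrArg extendOutward hcoord)

end Contraction

section Develop

variable {ι Y : Type*} [TopologicalSpace Y] {y : Y}

/-- The loop traversed by a letter when the generators are sent to the loops `γ`. -/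
def letterPath (γ : ι → Path y y) (s : ι × Bool) : Path y y :=
  bif s.2 then γ s.1 else (γ s.1).symm

theorem letterPath_opp (γ : ι → Path y y) (s : ι × Bool) :
    letterPath γ (opp s) = (letterPath γ s).symm := by
  rcases s with ⟨i, _ | _⟩ <;> simp [letterPath, opp]

/-- The coordinates of a point of the tree, as elements of the unit interval. -/
def coordI (ξ : CayleyTree ι) (g : FreeGroup ι) (s : ι × Bool) : unitInterval :=
  ⟨ξ.coord g s, ξ.coord_nonneg g s, ξ.coord_le_one g s⟩

theorem continuous_coordI (g : FreeGroup ι) (s : ι × Bool) :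
    Continuous fun ξ : CayleyTree ι => ξ.coordI g s :=
  (continuous_coord g s).subtype_mk _

theorem exists_forall_ne_coord_eq_zero [Nonempty ι] (ξ : CayleyTree ι) (g : FreeGroup ι) :
    ∃ s, ∀ t, t ≠ s → ξ.coord g t = 0 := by
  by_cases h : ∃ s, ξ.coord g s ≠ 0
  · obtain ⟨s, hs⟩ := h
    exact ⟨s, fun t ht => (ξ.coord_eq_zero_or g t s ht).resolve_right hs⟩
  · push Not at h
    exact ⟨Classical.arbitrary _, fun t _ => h t⟩

variable [Nonempty ι]

/-- The map to `Y` sending the edge at `g` labelled `s` along `letterPath γ s`, on the star of the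
vertex `g`; a point outside the star is first projected to it. -/
noncomputable def developStar (γ : ι → Path y y) (g : FreeGroup ι) (ξ : CayleyTree ι) : Y :=
  letterPath γ (ξ.exists_forall_ne_coord_eq_zero g).choose
    (ξ.coordI g (ξ.exists_forall_ne_coord_eq_zero g).choose)

theorem developStar_eq (γ : ι → Path y y) {g : FreeGroup ι} {s : ι × Bool} {ξ : CayleyTree ι}
    (hs : ∀ t, t ≠ s → ξ.coord g t = 0) :
    developStar γ g ξ = letterPath γ s (ξ.coordI g s) := by
  obtain ⟨u, hu⟩ : ∃ u, (ξ.exists_forall_ne_coord_eq_zero g).choose = u := ⟨_, rfl⟩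
  have hchoose := (ξ.exists_forall_ne_coord_eq_zero g).choose_spec
  rw [developStar]
  rw [hu] at hchoose ⊢
  rcases eq_or_ne s u with rfl | hne
  · rfl
  · have hs0 : ξ.coordI g s = 0 := Subtype.ext (hchoose s hne)
    have hu0 : ξ.coordI g u = 0 := Subtype.ext (hs u hne.symm)
    rw [hs0, hu0, Path.source, Path.source]

theorem continuous_developStar [Finite ι] (γ : ι → Path y y) (g : FreeGroup ι) :
    Continuous (developStar γ g) := by
  refine (locallyFinite_of_finite fun s => {ξ : CayleyTree ι | ∀ t, t ≠ s → ξ.coord g t = 0})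
    |>.continuous ?_ (fun s => ?_) fun s => ?_
  · exact eq_univ_iff_forall.2 fun ξ => mem_iUnion.2 (ξ.exists_forall_ne_coord_eq_zero g)
  · simp only [ofPred_forall]
    exact isClosed_iInter fun t => isClosed_iInter fun _ =>
      isClosed_eq (continuous_coord g t) continuous_const
  · exact ((letterPath γ s).continuous.comp (continuous_coordI g s)).continuousOn.congr
      fun ξ hξ => developStar_eq γ hξ

theorem developStar_eq_developStar (γ : ι → Path y y) {g h : FreeGroup ι} {ξ : CayleyTree ι}
    (hg : ∀ s, ξ.coord g s < 1) (hh : ∀ s, ξ.coord h s < 1) :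
    developStar γ g ξ = developStar γ h ξ := by
  rcases eq_or_ne h g with rfl | hne
  · rfl
  obtain ⟨s, hs⟩ := exists_forall_coord_opp_pos hne
  obtain ⟨hpos, hor⟩ := hs ξ hg
  obtain rfl := hor.resolve_left (hh _).ne
  have hsum := ξ.coord_add_coord_opp g s
  have hpos' : 0 < ξ.coord g s := by linarith [hh (opp s)]
  rw [developStar_eq γ (fun t ht => ξ.coord_eq_zero hpos' ht),
    developStar_eq γ (fun t ht => ξ.coord_eq_zero hpos ht), letterPath_opp, Path.symm_apply]
  exact congrArg _ (Subtype.ext (eq_sub_of_add_eq hsum))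

/-- The equivariant map from the tree induced by loops `γ`, one for each generator. -/
noncomputable def develop (γ : ι → Path y y) (ξ : CayleyTree ι) : Y :=
  developStar γ ξ.exists_coord_lt_one.choose ξ

theorem develop_eq_developStar (γ : ι → Path y y) {g : FreeGroup ι} {ξ : CayleyTree ι}
    (hg : ∀ s, ξ.coord g s < 1) : develop γ ξ = developStar γ g ξ :=
  developStar_eq_developStar γ ξ.exists_coord_lt_one.choose_spec hg

theorem continuous_develop [Finite ι] (γ : ι → Path y y) : Continuous (develop γ) := by
  refine continuous_iff_continuousAt.2 fun ξ => ?_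
  obtain ⟨g, hg⟩ := ξ.exists_coord_lt_one
  refine (continuous_developStar γ g).continuousAt.congr ?_
  filter_upwards [(isOpen_setOf_forall_coord_lt g 1).mem_nhds hg] with η hη
  exact (develop_eq_developStar γ hη).symm

theorem develop_smul (γ : ι → Path y y) (δ : FreeGroup ι) (ξ : CayleyTree ι) :
    develop γ (δ • ξ) = develop γ ξ := by
  obtain ⟨g, hg⟩ := (δ • ξ).exists_coord_lt_one
  obtain ⟨s, hs⟩ := (δ • ξ).exists_forall_ne_coord_eq_zero g
  rw [develop_eq_developStar γ hg, develop_eq_developStar γ (g := g * δ) (ξ := ξ) hg,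
    developStar_eq γ hs, developStar_eq γ (g := g * δ) (ξ := ξ) hs]
  rfl

theorem develop_edge [DecidableEq ι] (γ : ι → Path y y) (a : ι × Bool) (t : unitInterval) :
    develop γ (edge a t) = letterPath γ a t := by
  rcases t.2.2.lt_or_eq with ht | ht
  · have hlt (s : ι × Bool) : (edge a t).coord 1 s < 1 := by
      rw [coord_edge_one]
      split_ifs
      exacts [ht, one_pos]
    rw [develop_eq_developStar γ hlt,
      developStar_eq γ fun s hs => (coord_edge_one a t s).trans (if_neg hs)]
    exact congrArg _ (Subtype.ext ((coord_edge_one a t a).trans (if_pos rfl)))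
  · obtain rfl : t = 1 := Subtype.ext ht
    have hzero : (edge a 1).coordI (letter a) a = 0 := Subtype.ext (coord_edge_letter a a)
    rw [develop_eq_developStar γ (fun s => (coord_edge_letter a s).trans_lt one_pos),
      developStar_eq γ fun s _ => coord_edge_letter a s, hzero, Path.source, Path.target]

end Develop

end CayleyTree

/-! ### The punctured Möbius band -/

/-- The sup-norm distance to the centre of the removed disc. -/
noncomputable def centerDist (p : ℝ × ℝ) : ℝ := max |p.1 - 1 / 2| |p.2|

@[fun_prop]
theorem continuous_centerDist : Continuous centerDist := by unfold centerDist; fun_prop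

theorem dist_center (p : ℝ × ℝ) : dist p (1 / 2, 0) = centerDist p := by
  rw [Prod.dist_eq, Real.dist_eq, Real.dist_eq, sub_zero, centerDist]

theorem rel.abs_snd_eq {p q : Sq} (h : rel p q) : |(p : ℝ × ℝ).2| = |(q : ℝ × ℝ).2| := by
  rcases h with h | ⟨-, -, h⟩ | ⟨-, -, h⟩ <;> simp only [h, abs_neg]

theorem rel.centerDist_eq {p q : Sq} (h : rel p q) :
    centerDist (p : ℝ × ℝ) = centerDist (q : ℝ × ℝ) := by
  rcases h with h | ⟨hp, hq, hy⟩ | ⟨hp, hq, hy⟩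
  · rw [h]
  all_goals norm_num [centerDist, hp, hq, hy]

/-- Coordinates which embed the Möbius band in `ℝ⁴`. With `w = x * (1 - x)`, the first two
determine `x` unless `w = 0`, and the last two determine `y`, up to the sign change over the
seam. -/
def seamInvariants (p : ℝ × ℝ) : ℝ × ℝ × ℝ × ℝ :=
  (p.1 * (1 - p.1), p.1 ^ 2 * (1 - p.1), p.2 * (1 - 2 * p.1), p.2 * (p.1 * (1 - p.1)))

theorem rel_iff_seamInvariants_eq {p q : Sq} :
    rel p q ↔ seamInvariants (p : ℝ × ℝ) = seamInvariants (q : ℝ × ℝ) := by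
  refine ⟨?_, fun h => ?_⟩
  · rintro (h | ⟨hp, hq, hy⟩ | ⟨hp, hq, hy⟩)
    · rw [h]
    all_goals norm_num [seamInvariants, hp, hq, hy]
  obtain ⟨⟨x, y⟩, _⟩ := p
  obtain ⟨⟨x', y'⟩, _⟩ := q
  simp only [seamInvariants, Prod.mk.injEq] at h
  obtain ⟨hw, hxw, hy, hyw⟩ := h
  simp only [rel, Prod.mk.injEq]
  by_cases hw0 : x * (1 - x) = 0
  · have hx : x = 0 ∨ x = 1 := (mul_eq_zero.1 hw0).imp_right fun h => (sub_eq_zero.1 h).symm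
    have hx' : x' = 0 ∨ x' = 1 :=
      (mul_eq_zero.1 (hw.symm.trans hw0)).imp_right fun h => (sub_eq_zero.1 h).symm
    rcases hx with rfl | rfl <;> rcases hx' with rfl | rfl <;> norm_num at hy ⊢ <;> linarith
  · have hxx : x = x' := mul_right_cancel₀ hw0 (by linear_combination hxw - x' * hw)
    subst hxx
    exact Or.inl ⟨rfl, mul_right_cancel₀ hw0 hyw⟩

theorem qm_eq_qm_iff {p q : Sq} : qm p = qm q ↔ rel p q := by
  refine ⟨fun h => rel_iff_seamInvariants_eq.2 ?_, fun h => Quot.sound h⟩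
  exact congrArg (Quot.lift (fun p : Sq => seamInvariants p)
    fun _ _ => rel_iff_seamInvariants_eq.1) h

theorem continuous_qm : Continuous qm := continuous_quot_mk

instance : T2Space M := by
  refine T2Space.of_injective_continuous
    (f := Quot.lift (fun p : Sq => seamInvariants p) fun _ _ => rel_iff_seamInvariants_eq.1) ?_
    (continuous_quot_lift _ (by unfold seamInvariants; fun_prop))
  rintro ⟨p⟩ ⟨q⟩ h
  exact Quot.sound (rel_iff_seamInvariants_eq.2 h)

/-- The function `|y|` on the Möbius band. It is equal to `1` exactly on the boundary. -/
noncomputable def absHeight : C(M, ℝ) :=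
  ⟨Quot.lift (fun p : Sq => |(p : ℝ × ℝ).2|) fun _ _ => rel.abs_snd_eq,
    continuous_quot_lift _ (by fun_prop)⟩

/-- The sup-norm distance to the centre of the removed disc, as a function on the Möbius band. -/
noncomputable def holeDist : C(M, ℝ) :=
  ⟨Quot.lift (fun p : Sq => centerDist p) fun _ _ => rel.centerDist_eq,
    continuous_quot_lift _ (by fun_prop)⟩

theorem absHeight_qm (p : Sq) : absHeight (qm p) = |(p : ℝ × ℝ).2| := rfl

theorem holeDist_qm (p : Sq) : holeDist (qm p) = centerDist p := rfl

theorem absHeight_le_one (m : M) : absHeight m ≤ 1 := by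
  obtain ⟨p⟩ := m
  exact abs_le.2 p.2.2

theorem absHeight_le_holeDist (m : M) : absHeight m ≤ holeDist m := by
  obtain ⟨p⟩ := m
  exact le_max_right _ _

theorem mem_Xset_iff {m : M} : m ∈ Xset ↔ 1 / 4 ≤ holeDist m := by
  constructor
  · obtain ⟨p⟩ := m
    intro hm
    by_contra! hp
    exact hm ⟨p, (dist_center _).trans_lt hp, rfl⟩
  · rintro hm ⟨p, hp, rfl⟩
    exact hm.not_gt ((dist_center _).symm.trans_lt hp)

theorem mem_C1_iff {x : X} : x ∈ C1 ↔ absHeight x = 1 := by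
  constructor
  · rintro ⟨p, hp, hy⟩
    rw [← hp, absHeight_qm]
    exact (abs_eq zero_le_one).2 hy
  · obtain ⟨⟨p⟩, -⟩ := x
    exact fun h => ⟨p, rfl, (abs_eq zero_le_one).1 h⟩

theorem mem_C2_iff {x : X} : x ∈ C2 ↔ holeDist x = 1 / 4 := by
  constructor
  · rintro ⟨p, hp, hS⟩
    rw [← hp, holeDist_qm, ← dist_center]
    exact hS
  · obtain ⟨⟨p⟩, -⟩ := x
    exact fun h => ⟨p, rfl, (dist_center _).trans h⟩

theorem disjoint_C1_C2 : Disjoint C1 C2 := by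
  refine disjoint_left.2 fun x h1 h2 => ?_
  have := absHeight_le_holeDist x
  rw [mem_C1_iff.1 h1, mem_C2_iff.1 h2] at this
  norm_num at this

theorem isClosed_C1 : IsClosed C1 := by
  rw [show C1 = {x : X | absHeight x = 1} from ext fun _ => mem_C1_iff]
  exact isClosed_eq (by fun_prop) continuous_const

theorem isClosed_C2 : IsClosed C2 := by
  rw [show C2 = {x : X | holeDist x = 1 / 4} from ext fun _ => mem_C2_iff]
  exact isClosed_eq (by fun_prop) continuous_const

/-- The square with the open disc removed, of which `X` is a quotient. -/
def PuncturedSquare : Set (ℝ × ℝ) := {p ∈ Sq | 1 / 4 ≤ centerDist p}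

instance : CompactSpace PuncturedSquare :=
  isCompact_iff_compactSpace.1 <| (isCompact_Icc.prod isCompact_Icc).inter_right <|
    isClosed_le continuous_const continuous_centerDist

/-- The quotient map from the punctured square to the punctured Möbius band. -/
def toX (p : PuncturedSquare) : X := ⟨qm ⟨p, p.2.1⟩, mem_Xset_iff.2 p.2.2⟩

@[fun_prop]
theorem continuous_toX : Continuous toX :=
  (continuous_qm.comp (continuous_subtype_val.subtype_mk _)).subtype_mk _

theorem surjective_toX : Function.Surjective toX := by
  rintro ⟨⟨p⟩, hp⟩
  exact ⟨⟨p, p.2, mem_Xset_iff.1 hp⟩, rfl⟩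

theorem toX_eq_toX_iff {p q : PuncturedSquare} :
    toX p = toX q ↔ rel ⟨p, p.2.1⟩ ⟨q, q.2.1⟩ := by
  rw [← qm_eq_qm_iff, Subtype.ext_iff]
  rfl

theorem absHeight_toX (p : PuncturedSquare) : absHeight (toX p) = |(p : ℝ × ℝ).2| := rfl

theorem holeDist_toX (p : PuncturedSquare) : holeDist (toX p) = centerDist p := rfl

theorem C1_nonempty : C1.Nonempty :=
  ⟨toX ⟨(0, 1), by norm_num [PuncturedSquare, Sq, centerDist]⟩,
    mem_C1_iff.2 (by norm_num [absHeight_toX])⟩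

theorem C2_nonempty : C2.Nonempty :=
  ⟨toX ⟨(1 / 4, 0), by norm_num [PuncturedSquare, Sq, centerDist, abs_of_pos]⟩,
    mem_C2_iff.2 (by norm_num [holeDist_toX, centerDist, abs_of_pos])⟩

theorem exists_continuousMap_prod_of_seam {A Z : Type*} [TopologicalSpace A] [CompactSpace A]
    [T2Space A] [TopologicalSpace Z] (F : C(A × PuncturedSquare, Z))
    (hF : ∀ a (p q : PuncturedSquare), (p : ℝ × ℝ).1 = 0 → (q : ℝ × ℝ).1 = 1 →
      (p : ℝ × ℝ).2 = -(q : ℝ × ℝ).2 → F (a, p) = F (a, q)) :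
    ∃ G : C(A × X, Z), ∀ a p, G (a, toX p) = F (a, p) := by
  let π : C(A × PuncturedSquare, A × X) := ⟨Prod.map id toX, by fun_prop⟩
  have hπ : Topology.IsQuotientMap π := π.continuous.isClosedMap.isQuotientMap π.continuous
    (Function.surjective_id.prodMap surjective_toX)
  have hfactor : Function.FactorsThrough F π := by
    rintro ⟨a, p⟩ ⟨b, q⟩ h
    obtain ⟨rfl, hpq⟩ : a = b ∧ toX p = toX q := Prod.mk.inj h
    rcases toX_eq_toX_iff.1 hpq with h | ⟨hp, hq, hy⟩ | ⟨hp, hq, hy⟩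
    · rw [show p = q from Subtype.ext h]
    · exact hF a p q hp hq hy
    · exact (hF a q p hq hp hy).symm
  exact ⟨hπ.lift F hfactor, fun a p => DFunLike.congr_fun (hπ.lift_comp F hfactor) (a, p)⟩

open AffineMap (lineMap)

theorem mem_puncturedSquare_iff {p : ℝ × ℝ} :
    p ∈ PuncturedSquare ↔ p ∈ Sq ∧ (p.1 ≤ 1 / 4 ∨ 3 / 4 ≤ p.1 ∨ p.2 ≤ -(1 / 4) ∨ 1 / 4 ≤ p.2) := by
  simp only [PuncturedSquare, mem_ofPred_eq, centerDist, le_max_iff, le_abs']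
  grind

-- The complement of the hole in the square is a union of four rectangles.
theorem segment_subset_puncturedSquare {p q : ℝ × ℝ} (hp : p ∈ Sq) (hq : q ∈ Sq)
    (h : (p.1 ≤ 1 / 4 ∧ q.1 ≤ 1 / 4) ∨ (3 / 4 ≤ p.1 ∧ 3 / 4 ≤ q.1) ∨
      (p.2 ≤ -(1 / 4) ∧ q.2 ≤ -(1 / 4)) ∨ (1 / 4 ≤ p.2 ∧ 1 / 4 ≤ q.2)) :
    segment ℝ p q ⊆ PuncturedSquare := by
  intro z hz
  obtain ⟨hz1, hz2⟩ := Prod.segment_subset p q hz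
  refine mem_puncturedSquare_iff.2
    ⟨((convex_Icc 0 1).prod (convex_Icc (-1) 1)).segment_subset hp hq hz, ?_⟩
  rcases h with ⟨hp, hq⟩ | ⟨hp, hq⟩ | ⟨hp, hq⟩ | ⟨hp, hq⟩
  · exact Or.inl ((convex_Iic _).segment_subset hp hq hz1)
  · exact Or.inr (Or.inl ((convex_Ici _).segment_subset hp hq hz1))
  · exact Or.inr (Or.inr (Or.inl ((convex_Iic _).segment_subset hp hq hz2)))
  · exact Or.inr (Or.inr (Or.inr ((convex_Ici _).segment_subset hp hq hz2)))

theorem exists_deformation_of_segment_subset {G : ℝ × ℝ → ℝ × ℝ} (hG : Continuous G)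
    (hseg : ∀ p ∈ PuncturedSquare, segment ℝ p (G p) ⊆ PuncturedSquare)
    (hseam : ∀ y, (G (0, -y)).1 = 0 ∧ (G (1, y)).1 = 1 ∧ (G (0, -y)).2 = -(G (1, y)).2) :
    ∃ D : C(unitInterval × X, X), (∀ x, D (0, x) = x) ∧
      ∀ (s : unitInterval) (p : PuncturedSquare), ∃ q : PuncturedSquare,
        (q : ℝ × ℝ) = lineMap (p : ℝ × ℝ) (G p) (s : ℝ) ∧ D (s, toX p) = toX q := by
  have hmem (s : unitInterval) (p : PuncturedSquare) :
      lineMap (p : ℝ × ℝ) (G p) (s : ℝ) ∈ PuncturedSquare :=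
    hseg p p.2 (segment_eq_image_lineMap ℝ (p : ℝ × ℝ) (G p) ▸ mem_image_of_mem _ s.2)
  obtain ⟨D, hD⟩ := exists_continuousMap_prod_of_seam (A := unitInterval)
    ⟨fun u => toX ⟨_, hmem u.1 u.2⟩, by
      simp only [AffineMap.lineMap_apply_module]; fun_prop⟩ <| by
    rintro s ⟨⟨x, y⟩, hp⟩ ⟨⟨x', y'⟩, hp'⟩ (rfl : x = 0) (rfl : x' = 1) (rfl : y = -y')
    obtain ⟨h0, h1, hy⟩ := hseam y'
    refine toX_eq_toX_iff.2 (Or.inr (Or.inl ⟨?_, ?_, ?_⟩))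
    · simp [AffineMap.lineMap_apply_module, h0]
    · simp [AffineMap.lineMap_apply_module, h1]
    · simp only [AffineMap.lineMap_apply_module, Prod.snd_add, Prod.smul_snd, hy, smul_eq_mul]
      ring
  refine ⟨D, fun x => ?_, fun s p => ⟨_, rfl, hD s p⟩⟩
  obtain ⟨p, rfl⟩ := surjective_toX x
  exact (hD 0 p).trans (congrArg toX (Subtype.ext (AffineMap.lineMap_apply_zero _ _)))

/-- Truncation of a real number to the interval `[-r, r]`. It is meant for `0 ≤ r`. -/
def clamp (r y : ℝ) : ℝ := max (-r) (min r y)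

@[fun_prop]
theorem continuous_clamp {Y : Type*} [TopologicalSpace Y] {r f : Y → ℝ} (hr : Continuous r)
    (hf : Continuous f) : Continuous fun y => clamp (r y) (f y) := by
  unfold clamp
  fun_prop

theorem clamp_neg {r : ℝ} (hr : 0 ≤ r) (y : ℝ) : clamp r (-y) = -clamp r y := by
  unfold clamp; grind

theorem abs_clamp {r : ℝ} (hr : 0 ≤ r) (y : ℝ) : |clamp r y| = min r |y| := by
  unfold clamp; grind

theorem clamp_of_abs_le {r y : ℝ} (h : |y| ≤ r) : clamp r y = y := by
  unfold clamp; grind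

theorem clamp_of_le {r y : ℝ} (hr : 0 ≤ r) (h : r ≤ y) : clamp r y = r := by
  unfold clamp; grind

theorem le_clamp {c r y : ℝ} (hr : c ≤ r) (h : c ≤ y) : c ≤ clamp r y :=
  le_max_of_le_right (le_min hr h)

theorem clamp_le {c r y : ℝ} (hr : c ≤ r) (h : y ≤ -c) : clamp r y ≤ -c := by
  unfold clamp; grind

theorem abs_clamp_le {r : ℝ} (hr : 0 ≤ r) (y : ℝ) : |clamp r y| ≤ r :=
  (abs_clamp hr y).trans_le (min_le_left _ _)

theorem exists_lowering : ∃ D : C(unitInterval × X, X), (∀ x, D (0, x) = x) ∧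
    ∀ (s : unitInterval) (x : X), (absHeight x ≤ 1 / 2 → D (s, x) = x) ∧
      (1 / 2 ≤ absHeight x → absHeight (D (s, x)) = (1 - s) * absHeight x + s * (1 / 2)) := by
  have hseg (p) (hp : p ∈ PuncturedSquare) :
      segment ℝ p (p.1, clamp (1 / 2) p.2) ⊆ PuncturedSquare := by
    obtain ⟨hpS, hp⟩ := mem_puncturedSquare_iff.1 hp
    refine segment_subset_puncturedSquare hpS ⟨hpS.1, abs_le.1 ?_⟩ ?_
    · exact (abs_clamp_le (by norm_num) _).trans (by norm_num)
    · exact hp.imp (fun h => ⟨h, h⟩) <| Or.imp (fun h => ⟨h, h⟩) <| Or.imp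
        (fun h => ⟨h, clamp_le (by norm_num) h⟩) fun h => ⟨h, le_clamp (by norm_num) h⟩
  obtain ⟨D, D_zero, hD⟩ := exists_deformation_of_segment_subset (by fun_prop) hseg
    fun y => ⟨rfl, rfl, clamp_neg (by norm_num) y⟩
  refine ⟨D, D_zero, fun s x => ?_⟩
  obtain ⟨p, rfl⟩ := surjective_toX x
  obtain ⟨q, hq, h⟩ := hD s p
  rw [h, absHeight_toX, absHeight_toX, hq]
  refine ⟨fun hy => congrArg toX (Subtype.ext ?_), fun hy => ?_⟩
  · rw [hq, clamp_of_abs_le hy, AffineMap.lineMap_same_apply]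
  · have hs0 := s.2.1
    have hs1 := s.2.2
    simp only [AffineMap.lineMap_apply_module, Prod.snd_add, Prod.smul_snd, smul_eq_mul]
    rcases le_total 0 (p : ℝ × ℝ).2 with hp | hp
    · rw [abs_of_nonneg hp] at hy ⊢
      rw [clamp_of_le (by norm_num) hy, abs_of_nonneg (by nlinarith)]
    · rw [abs_of_nonpos hp] at hy ⊢
      rw [← neg_neg (p : ℝ × ℝ).2, clamp_neg (by norm_num), clamp_of_le (by norm_num) hy,
        abs_of_nonpos (by nlinarith)]
      ring

/-- The odd piecewise linear map with slope `1` on `[-1/2, 1/2]` and slope `2` elsewhere. -/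
noncomputable def stretch (y : ℝ) : ℝ := 2 * y - clamp (1 / 2) y

theorem stretch_neg (y : ℝ) : stretch (-y) = -stretch y := by
  rw [stretch, clamp_neg (by norm_num), stretch]
  ring

theorem stretch_of_abs_le {y : ℝ} (h : |y| ≤ 1 / 2) : stretch y = y := by
  rw [stretch, clamp_of_abs_le h]
  ring

theorem stretch_of_half_le {y : ℝ} (h : 1 / 2 ≤ y) : stretch y = 2 * y - 1 / 2 := by
  rw [stretch, clamp_of_le (by norm_num) h]

theorem abs_stretch_of_half_le {y : ℝ} (h : 1 / 2 ≤ |y|) : |stretch y| = 2 * |y| - 1 / 2 := by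
  rcases abs_choice y with hy | hy <;> rw [hy] at h ⊢
  · rw [stretch_of_half_le h, abs_of_nonneg (by linarith)]
  · rw [← abs_neg, ← stretch_neg, stretch_of_half_le h, abs_of_nonneg (by linarith)]

/-- The radius to which `collarMap` truncates a point at distance `n` from the centre of the
hole. -/
noncomputable def collarRadius (n : ℝ) : ℝ := max (1 / 4) (2 * n - 1 / 2)

theorem quarter_le_collarRadius (n : ℝ) : 1 / 4 ≤ collarRadius n := le_max_left _ _

theorem collarRadius_of_le {n : ℝ} (h : n ≤ 3 / 8) : collarRadius n = 1 / 4 :=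
  max_eq_left (by linarith)

theorem le_collarRadius {n : ℝ} (h : 1 / 2 ≤ n) : n ≤ collarRadius n :=
  le_max_of_le_right (by linarith)

/-- A map of the punctured square which pushes the collar `3/4 ≤ |y|` onto `|y| = 1` and the collar
`centerDist ≤ 3/8` onto the boundary of the hole, and fixes the boundary. -/
noncomputable def collarMap (p : ℝ × ℝ) : ℝ × ℝ :=
  (1 / 2 + clamp (collarRadius (centerDist p)) (p.1 - 1 / 2),
    clamp (min 1 (collarRadius (centerDist p))) (stretch p.2))

@[fun_prop]
theorem continuous_collarMap : Continuous collarMap := by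
  unfold collarMap collarRadius stretch
  fun_prop

theorem collarMap_eq_self {p : ℝ × ℝ} (h : |p.2| = 1 ∨ centerDist p = 1 / 4) :
    collarMap p = p := by
  have hx : |p.1 - 1 / 2| ≤ centerDist p := le_max_left _ _
  have hy : |p.2| ≤ centerDist p := le_max_right _ _
  have hr : centerDist p ≤ collarRadius (centerDist p) := by
    rcases h with h | h
    · exact le_collarRadius (by linarith)
    · exact h ▸ quarter_le_collarRadius _
  refine Prod.ext ?_ ?_
  · rw [collarMap, clamp_of_abs_le (hx.trans hr), add_sub_cancel]
  · rcases h with h | h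
    · rw [collarMap, min_eq_left (by linarith)]
      rcases (abs_eq zero_le_one).1 h with h | h <;>
        norm_num [h, stretch_neg, stretch_of_half_le, clamp_neg, clamp_of_le]
    · simp only [collarMap]
      rw [stretch_of_abs_le (by linarith), clamp_of_abs_le]
      exact le_min (by linarith) (hy.trans hr)

theorem abs_collarMap_snd {p : ℝ × ℝ} (h : 3 / 4 ≤ |p.2|) : |(collarMap p).2| = 1 := by
  have hy : |p.2| ≤ centerDist p := le_max_right _ _
  have hr : 1 ≤ collarRadius (centerDist p) := le_max_of_le_right (by linarith)
  rw [collarMap, min_eq_left hr, abs_clamp zero_le_one, abs_stretch_of_half_le (by linarith)]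
  exact min_eq_left (by linarith)

theorem centerDist_collarMap {p : ℝ × ℝ} (hp : 1 / 4 ≤ centerDist p) (h : centerDist p ≤ 3 / 8) :
    centerDist (collarMap p) = 1 / 4 := by
  have hy : |p.2| ≤ centerDist p := le_max_right _ _
  rw [collarMap, collarRadius_of_le h, stretch_of_abs_le (by linarith),
    min_eq_right (by norm_num), centerDist, add_sub_cancel_left, abs_clamp (by norm_num),
    abs_clamp (by norm_num), ← min_max_distrib_left]
  exact min_eq_left hp

theorem segment_collarMap_subset {p : ℝ × ℝ} (hp : p ∈ PuncturedSquare) :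
    segment ℝ p (collarMap p) ⊆ PuncturedSquare := by
  obtain ⟨hpS, hp⟩ := mem_puncturedSquare_iff.1 hp
  have hr := quarter_le_collarRadius (centerDist p)
  have hr' : 1 / 4 ≤ min 1 (collarRadius (centerDist p)) := le_min (by norm_num) hr
  refine segment_subset_puncturedSquare hpS ⟨?_, abs_le.1 ?_⟩ ?_
  · have : |clamp (collarRadius (centerDist p)) (p.1 - 1 / 2)| ≤ 1 / 2 := by
      rw [abs_clamp (by linarith)]
      exact min_le_of_right_le (abs_le.2 ⟨by linarith [hpS.1.1], by linarith [hpS.1.2]⟩)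
    constructor <;> simp only [collarMap] <;> linarith [abs_le.1 this]
  · exact (abs_clamp_le (by linarith) _).trans (min_le_left _ _)
  · refine hp.imp (fun h => ⟨h, ?_⟩) <| Or.imp (fun h => ⟨h, ?_⟩) <| Or.imp
      (fun h => ⟨h, clamp_le hr' ?_⟩) fun h => ⟨h, le_clamp hr' ?_⟩
    · have := clamp_le hr (show p.1 - 1 / 2 ≤ -(1 / 4) by linarith)
      simp only [collarMap]
      linarith
    · have := le_clamp hr (show 1 / 4 ≤ p.1 - 1 / 2 by linarith)
      simp only [collarMap]
      linarith
    all_goals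
      simp only [stretch, clamp]
      grind

theorem collarMap_seam (y : ℝ) : (collarMap (0, -y)).1 = 0 ∧ (collarMap (1, y)).1 = 1 ∧
    (collarMap (0, -y)).2 = -(collarMap (1, y)).2 := by
  have hn : centerDist (0, -y) = centerDist (1, y) := by norm_num [centerDist]
  have hx0 : |(0 : ℝ) - 1 / 2| = 1 / 2 := by norm_num [abs_of_pos]
  have hx1 : |(1 : ℝ) - 1 / 2| = 1 / 2 := by norm_num [abs_of_pos]
  have hn' : 1 / 2 ≤ centerDist (1, y) := hx1.symm.trans_le (le_max_left _ _)
  have hr : 1 / 2 ≤ collarRadius (centerDist (1, y)) := hn'.trans (le_collarRadius hn')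
  simp only [collarMap, hn, stretch_neg]
  rw [clamp_of_abs_le (hx0.trans_le hr), clamp_of_abs_le (hx1.trans_le hr),
    clamp_neg (le_min zero_le_one (by linarith))]
  norm_num

theorem exists_collar_deformation : ∃ D : C(unitInterval × X, X), (∀ x, D (0, x) = x) ∧
    (∀ s, ∀ x ∈ Bd, D (s, x) = x) ∧ (∀ x : X, 3 / 4 ≤ absHeight x → D (1, x) ∈ C1) ∧
    ∀ x : X, holeDist x ≤ 3 / 8 → D (1, x) ∈ C2 := by
  obtain ⟨D, D_zero, hD⟩ := exists_deformation_of_segment_subset continuous_collarMap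
    (fun _ => segment_collarMap_subset) collarMap_seam
  refine ⟨D, D_zero, fun s x hx => ?_, fun x hx => ?_, fun x hx => ?_⟩ <;>
    obtain ⟨p, rfl⟩ := surjective_toX x
  · obtain ⟨q, hq, h⟩ := hD s p
    rw [collarMap_eq_self (hx.imp mem_C1_iff.1 mem_C2_iff.1),
      AffineMap.lineMap_same_apply] at hq
    rw [h, Subtype.ext hq]
  · obtain ⟨q, hq, h⟩ := hD 1 p
    rw [h, mem_C1_iff, absHeight_toX, hq, Icc.coe_one, AffineMap.lineMap_apply_one]
    exact abs_collarMap_snd hx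
  · obtain ⟨q, hq, h⟩ := hD 1 p
    rw [h, mem_C2_iff, holeDist_toX, hq, Icc.coe_one, AffineMap.lineMap_apply_one]
    exact centerDist_collarMap p.2.2 hx

/-- A function which is `-1` on `C1` and `1` on `C2`, and is negative, resp. positive, exactly on an
open collar of `C1`, resp. `C2`. -/
noncomputable def collarCoord : C(X, ℝ) :=
  ⟨fun x => max 0 (3 - 8 * holeDist x) - max 0 (4 * absHeight x - 3), by fun_prop⟩

theorem collarCoord_of_mem_C1 {x : X} (hx : x ∈ C1) : collarCoord x = -1 := by
  have hy := mem_C1_iff.1 hx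
  have hn : 1 ≤ holeDist x := hy.symm.trans_le (absHeight_le_holeDist x)
  simp only [collarCoord, ContinuousMap.coe_mk]
  rw [hy, max_eq_left (by linarith)]
  norm_num

theorem collarCoord_of_mem_C2 {x : X} (hx : x ∈ C2) : collarCoord x = 1 := by
  have hn := mem_C2_iff.1 hx
  have hy : absHeight x ≤ 1 / 4 := (absHeight_le_holeDist x).trans_eq hn
  simp only [collarCoord, ContinuousMap.coe_mk]
  rw [hn, max_eq_left (show 4 * absHeight x - 3 ≤ 0 by linarith)]
  norm_num

theorem abs_collarCoord_le_one (x : X) : |collarCoord x| ≤ 1 := by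
  have hy := absHeight_le_one x
  have hn := mem_Xset_iff.1 x.2
  have h1 : max 0 (4 * absHeight x - 3) ≤ 1 := max_le zero_le_one (by linarith)
  have h2 : max 0 (3 - 8 * holeDist x) ≤ 1 := max_le zero_le_one (by linarith)
  have h1' : 0 ≤ max 0 (4 * absHeight x - 3) := le_max_left _ _
  have h2' : 0 ≤ max 0 (3 - 8 * holeDist x) := le_max_left _ _
  exact abs_le.2 ⟨by simp only [collarCoord, ContinuousMap.coe_mk]; linarith,
    by simp only [collarCoord, ContinuousMap.coe_mk]; linarith⟩

theorem exists_ndrData_Bd : ∃ N : NDRData Bd, (∀ x, (N.height x : ℝ) = 1 - |collarCoord x|) ∧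
    (∀ x, collarCoord x < 0 → N.push (1, x) ∈ C1) ∧
    ∀ x, 0 < collarCoord x → N.push (1, x) ∈ C2 := by
  obtain ⟨D, D_zero, D_self, hD1, hD2⟩ := exists_collar_deformation
  have hneg (x : X) (hx : collarCoord x < 0) : D (1, x) ∈ C1 := by
    refine hD1 x ?_
    by_contra! h
    simp only [collarCoord, ContinuousMap.coe_mk] at hx
    rw [max_eq_left (show 4 * absHeight x - 3 ≤ 0 by linarith), sub_zero] at hx
    exact (le_max_left _ _).not_gt hx
  have hpos (x : X) (hx : 0 < collarCoord x) : D (1, x) ∈ C2 := by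
    refine hD2 x ?_
    by_contra! h
    simp only [collarCoord, ContinuousMap.coe_mk] at hx
    rw [max_eq_left (show 3 - 8 * holeDist x ≤ 0 by linarith), zero_sub, neg_pos] at hx
    exact (le_max_left _ _).not_gt hx
  refine ⟨{
    height := ⟨fun x => ⟨1 - |collarCoord x|, sub_nonneg.2 (abs_collarCoord_le_one x),
      sub_le_self _ (abs_nonneg _)⟩, by fun_prop⟩
    push := D
    height_eq_zero := ?_
    push_zero := D_zero
    push_eq_self := D_self
    push_one_mem := ?_ }, fun x => rfl, hneg, hpos⟩
  · rintro x (hx | hx) <;> refine Subtype.ext ?_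
    · simp [collarCoord_of_mem_C1 hx]
    · simp [collarCoord_of_mem_C2 hx]
  · intro x hx
    have h0 : collarCoord x ≠ 0 := fun h => hx (Subtype.ext (by simp [h]))
    exact h0.lt_or_gt.imp (hneg x) (hpos x)

/-! ### The spine -/

/-- The parameter along the spine to which the points of first coordinate `x` retract: the middle
half of the square is stretched over all of `[0, 1]`, and the two outer quarters collapse. -/
noncomputable def spineParam (x : ℝ) : unitInterval := projIcc 0 1 zero_le_one (2 * x - 1 / 2)

@[fun_prop]
theorem continuous_spineParam : Continuous spineParam := by unfold spineParam; fun_prop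

theorem spineParam_of_le {x : ℝ} (h : x ≤ 1 / 4) : spineParam x = 0 :=
  projIcc_of_le_left _ (by linarith)

theorem spineParam_of_ge {x : ℝ} (h : 3 / 4 ≤ x) : spineParam x = 1 :=
  projIcc_of_right_le _ (by linarith)

theorem spineParam_eq_zero_or_one {p : ℝ × ℝ} (hp : p ∈ PuncturedSquare) (h : |p.2| < 1 / 4) :
    spineParam p.1 = 0 ∨ spineParam p.1 = 1 := by
  obtain ⟨hy0, hy1⟩ := abs_lt.1 h
  rcases (mem_puncturedSquare_iff.1 hp).2 with hx | hx | hy | hy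
  · exact Or.inl (spineParam_of_le hx)
  · exact Or.inr (spineParam_of_ge hx)
  · exact absurd hy hy0.not_ge
  · exact absurd hy hy1.not_ge

theorem exists_pinch {Z : Type*} [TopologicalSpace Z] {z : Z} (γ : Bool → Path z z) :
    ∃ G : C(X, Z), ∀ p : PuncturedSquare,
      (0 ≤ (p : ℝ × ℝ).2 → G (toX p) = γ true (spineParam (p : ℝ × ℝ).1)) ∧
      ((p : ℝ × ℝ).2 ≤ 0 → G (toX p) = γ false (spineParam (p : ℝ × ℝ).1)) := by
  have hagree (p : PuncturedSquare) (hp : (p : ℝ × ℝ).2 = 0) :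
      γ true (spineParam (p : ℝ × ℝ).1) = γ false (spineParam (p : ℝ × ℝ).1) := by
    rcases spineParam_eq_zero_or_one p.2 (by norm_num [hp]) with h | h <;>
      simp only [h, Path.source, Path.target]
  let g : C(Unit × PuncturedSquare, Z) :=
    ⟨fun u => if 0 ≤ (u.2 : ℝ × ℝ).2 then γ true (spineParam (u.2 : ℝ × ℝ).1)
      else γ false (spineParam (u.2 : ℝ × ℝ).1),
      Continuous.if_le (by fun_prop) (by fun_prop) (by fun_prop) (by fun_prop)
        fun u hu => hagree u.2 hu.symm⟩
  obtain ⟨G, hG⟩ := exists_continuousMap_prod_of_seam g fun u p q hp hq _ => by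
    simp only [g, ContinuousMap.coe_mk, hp, hq, spineParam_of_le (show (0 : ℝ) ≤ 1 / 4 by norm_num),
      spineParam_of_ge (show (3 / 4 : ℝ) ≤ 1 by norm_num), Path.source, Path.target, ite_self]
  refine ⟨⟨fun x => G ((), x), by fun_prop⟩, fun p => ⟨fun hp => ?_, fun hp => ?_⟩⟩
  · exact (hG () p).trans (if_pos hp)
  · refine (hG () p).trans ?_
    by_cases hp' : 0 ≤ (p : ℝ × ℝ).2
    · exact (if_pos hp').trans (hagree p (le_antisymm hp hp'))
    · exact if_neg hp'

/-- The height of the spine loops over `[0, 1]`. -/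
def spineHeight (t : ℝ) : ℝ := 4 * t * (1 - t)

theorem spineHeight_nonneg (t : unitInterval) : 0 ≤ spineHeight t :=
  mul_nonneg (by linarith [t.2.1]) (by linarith [t.2.2])

theorem spineHeight_le_one (t : ℝ) : spineHeight t ≤ 1 := by
  unfold spineHeight
  nlinarith [sq_nonneg (2 * t - 1)]

theorem le_or_ge_or_quarter_le_spineHeight (t : ℝ) :
    t ≤ 1 / 4 ∨ 3 / 4 ≤ t ∨ 1 / 4 ≤ spineHeight t := by
  by_contra! ⟨h0, h1, h⟩
  unfold spineHeight at h
  nlinarith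

theorem spinePoint_mem (t : unitInterval) {y : ℝ} (h : |y| = spineHeight t) :
    ((t : ℝ), y) ∈ PuncturedSquare := by
  refine mem_puncturedSquare_iff.2
    ⟨⟨t.2, abs_le.1 (h.trans_le (spineHeight_le_one t))⟩, ?_⟩
  exact (le_or_ge_or_quarter_le_spineHeight t).imp_right (Or.imp_right fun ht => le_abs'.1 (h ▸ ht))

theorem origin_mem_puncturedSquare : ((0 : ℝ), (0 : ℝ)) ∈ PuncturedSquare :=
  spinePoint_mem 0 (by simp [spineHeight])

/-- The loops formed by the graph of `spineHeight`, for `true`, and by its mirror image. -/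
noncomputable def spineLoop (b : Bool) :
    Path (toX ⟨(0, 0), origin_mem_puncturedSquare⟩) (toX ⟨(0, 0), origin_mem_puncturedSquare⟩) where
  toFun t := toX ⟨(t, (bif b then 1 else -1) * spineHeight t), spinePoint_mem t (by
    cases b <;> simp [abs_of_nonneg (spineHeight_nonneg t)])⟩
  continuous_toFun := by unfold spineHeight; fun_prop
  source' := congrArg toX (Subtype.ext (by simp [spineHeight]))
  target' := toX_eq_toX_iff.2 (by simp [spineHeight, rel])

theorem exists_homotopic_id_of_segment_subset {G : ℝ × ℝ → ℝ × ℝ} (hG : Continuous G)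
    (hseg : ∀ p ∈ PuncturedSquare, segment ℝ p (G p) ⊆ PuncturedSquare)
    (hseam : ∀ y, (G (0, -y)).1 = 0 ∧ (G (1, y)).1 = 1 ∧ (G (0, -y)).2 = -(G (1, y)).2) :
    ∃ g : C(X, X), (ContinuousMap.id X).Homotopic g ∧
      ∀ p : PuncturedSquare, ∃ q : PuncturedSquare, (q : ℝ × ℝ) = G p ∧ g (toX p) = toX q := by
  obtain ⟨D, D_zero, hD⟩ := exists_deformation_of_segment_subset hG hseg hseam
  refine ⟨⟨fun x => D (1, x), by fun_prop⟩, ⟨⟨D, D_zero, fun _ => rfl⟩⟩, fun p => ?_⟩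
  obtain ⟨q, hq, h⟩ := hD 1 p
  exact ⟨q, by simpa using hq, h⟩

theorem segment_spineParam_subset {p : ℝ × ℝ} (hp : p ∈ PuncturedSquare) :
    segment ℝ p (spineParam p.1, p.2) ⊆ PuncturedSquare := by
  obtain ⟨hpS, hp⟩ := mem_puncturedSquare_iff.1 hp
  refine segment_subset_puncturedSquare hpS ⟨(spineParam p.1).2, hpS.2⟩ ?_
  refine hp.imp (fun h => ⟨h, ?_⟩) <| Or.imp (fun h => ⟨h, ?_⟩) <|
    Or.imp (fun h => ⟨h, h⟩) fun h => ⟨h, h⟩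
  · norm_num [spineParam_of_le h]
  · norm_num [spineParam_of_ge h]

theorem segment_spineHeight_subset {p : ℝ × ℝ} (hp : p ∈ PuncturedSquare) :
    segment ℝ p (p.1, clamp (spineHeight p.1) (4 * p.2)) ⊆ PuncturedSquare := by
  obtain ⟨hpS, hp⟩ := mem_puncturedSquare_iff.1 hp
  have hnonneg : 0 ≤ spineHeight p.1 := spineHeight_nonneg ⟨p.1, hpS.1⟩
  refine segment_subset_puncturedSquare hpS
    ⟨hpS.1, abs_le.1 ((abs_clamp_le hnonneg _).trans (spineHeight_le_one _))⟩ ?_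
  rcases le_or_ge_or_quarter_le_spineHeight p.1 with h | h | h
  · exact Or.inl ⟨h, h⟩
  · exact Or.inr (Or.inl ⟨h, h⟩)
  · exact hp.imp (fun h => ⟨h, h⟩) <| Or.imp (fun h => ⟨h, h⟩) <| Or.imp
      (fun hy => ⟨hy, clamp_le h (by linarith)⟩) fun hy => ⟨hy, le_clamp h (by linarith)⟩

theorem spineHeight_spineParam_le {p : ℝ × ℝ} (hp : p ∈ PuncturedSquare) :
    spineHeight (spineParam p.1) ≤ 4 * |p.2| := by
  rcases lt_or_ge |p.2| (1 / 4) with h | h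
  · rcases spineParam_eq_zero_or_one hp h with h | h <;> simp [h, spineHeight]
  · linarith [spineHeight_le_one (spineParam p.1)]

theorem exists_homotopic_id_pinch : ∃ e : C(X, X), (ContinuousMap.id X).Homotopic e ∧
    ∀ p : PuncturedSquare,
      (0 ≤ (p : ℝ × ℝ).2 → e (toX p) = spineLoop true (spineParam (p : ℝ × ℝ).1)) ∧
      ((p : ℝ × ℝ).2 ≤ 0 → e (toX p) = spineLoop false (spineParam (p : ℝ × ℝ).1)) := by
  obtain ⟨e₁, he₁, e₁_toX⟩ := exists_homotopic_id_of_segment_subset (by fun_prop)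
    (fun _ => segment_spineParam_subset) fun y => by
      norm_num [spineParam_of_le, spineParam_of_ge]
  obtain ⟨e₂, he₂, e₂_toX⟩ := exists_homotopic_id_of_segment_subset
    (by unfold spineHeight; fun_prop) (fun _ => segment_spineHeight_subset) fun y => by
      simp [spineHeight, clamp]
  refine ⟨e₂.comp e₁, he₂.comp he₁, fun p => ?_⟩
  obtain ⟨q, hq, hpq⟩ := e₁_toX p
  obtain ⟨r, hr, hqr⟩ := e₂_toX q
  rw [ContinuousMap.comp_apply, hpq, hqr]
  rw [hq] at hr
  have hle := spineHeight_spineParam_le p.2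
  have hnonneg := spineHeight_nonneg (spineParam (p : ℝ × ℝ).1)
  refine ⟨fun hy => ?_, fun hy => ?_⟩ <;> refine congrArg toX (Subtype.ext (hr.trans ?_))
  · rw [abs_of_nonneg hy] at hle
    simp [clamp_of_le hnonneg hle]
  · rw [abs_of_nonpos hy] at hle
    rw [← neg_neg (4 * (p : ℝ × ℝ).2), clamp_neg hnonneg, clamp_of_le hnonneg (by linarith)]
    simp

open CayleyTree

/-- The loop of the rose which runs along the petal `b`. -/
noncomputable def roseLoop (b : Bool) : Path (toRose (root Bool)) (toRose (root Bool)) where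
  toFun t := toRose (edge (b, true) t)
  continuous_toFun := isQuotientCoveringMap_toRose.continuous.comp (continuous_edge _)
  source' := by rw [edge_zero]
  target' := toRose_edge_one _

theorem exists_homotopic_id_eq_develop : ∃ (i : C(X, Rose Bool)) (e : C(X, X)),
    (ContinuousMap.id X).Homotopic e ∧ ∀ ξ x, toRose ξ = i x → develop spineLoop ξ = e x := by
  obtain ⟨i, hi⟩ := exists_pinch roseLoop
  obtain ⟨e, he, e_toX⟩ := exists_homotopic_id_pinch
  have develop_eq (ξ) (b : Bool) (t : unitInterval) (h : toRose ξ = roseLoop b t) :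
      develop spineLoop ξ = spineLoop b t := by
    obtain ⟨γ, rfl⟩ := toRose_eq_iff.1 h
    rw [develop_smul, develop_edge, letterPath, cond_true]
  refine ⟨i, e, he, fun ξ x hξ => ?_⟩
  obtain ⟨p, rfl⟩ := surjective_toX x
  rcases le_total 0 (p : ℝ × ℝ).2 with hp | hp
  · rw [(e_toX p).1 hp, develop_eq ξ true _ (hξ.trans ((hi p).1 hp))]
  · rw [(e_toX p).2 hp, develop_eq ξ false _ (hξ.trans ((hi p).2 hp))]

/-! ### Lifting maps to a covering with torsion-free deck group -/

/-- The projection of the infinite strip to the Möbius band, through the nearest point of the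
square. -/
noncomputable def bandChart : C(ℝ × ℝ, M) :=
  ⟨fun q => qm ⟨(projIcc 0 1 zero_le_one q.1, projIcc (-1) 1 (by norm_num) q.2),
    mk_mem_prod (Subtype.property _) (Subtype.property _)⟩, continuous_qm.comp (by fun_prop)⟩

theorem bandChart_of_mem (q : Sq) : bandChart q = qm q :=
  congrArg qm (Subtype.ext (Prod.ext (by simp [projIcc_of_mem _ q.2.1])
    (by simp [projIcc_of_mem _ q.2.2])))

theorem bandChart_seam (y : ℝ) : bandChart (1, -y) = bandChart (0, y) := by
  refine Quot.sound (Or.inr (Or.inr ⟨by simp, by simp, ?_⟩))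
  simp only [coe_projIcc]
  grind

theorem absHeight_bandChart (q : ℝ × ℝ) : absHeight (bandChart q) = min 1 |q.2| :=
  abs_clamp zero_le_one q.2

theorem isPreconnected_setOf_holeDist_le : IsPreconnected {m : M | holeDist m ≤ 1 / 4} := by
  have himage : bandChart '' Metric.closedBall (1 / 2, 0) (1 / 4) = {m | holeDist m ≤ 1 / 4} := by
    ext m
    constructor
    · rintro ⟨q, hq, rfl⟩
      rw [Metric.mem_closedBall, dist_center] at hq
      have hqS : q ∈ Sq := by
        obtain ⟨hx, hy⟩ := max_le_iff.1 hq
        grind [Sq, abs_le]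
      exact (congrArg holeDist (bandChart_of_mem ⟨q, hqS⟩)).trans_le hq
    · obtain ⟨q⟩ := m
      exact fun hm => ⟨q, (dist_center _).trans_le hm, bandChart_of_mem q⟩
  exact himage ▸ (convex_closedBall _ _).isPreconnected.image _ bandChart.continuous.continuousOn

section Lifting

variable {E B G : Type*} [TopologicalSpace E] [TopologicalSpace B] [Group G]
  [MulAction G E] {p : E → B}

theorem exists_lift_strip [IsMulTorsionFree G] (hp : IsQuotientCoveringMap p G) (F : C(ℝ × ℝ, B))
    {a : B} (hedge : ∀ x, F (x, 1) = a ∧ F (x, -1) = a) (hseam : ∀ y, F (1, -y) = F (0, y)) :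
    ∃ L : C(ℝ × ℝ, E), (∀ q, p (L q) = F q) ∧ (∀ y, L (1, -y) = L (0, y)) ∧
      ∃ c, ∀ x, L (x, 1) = c ∧ L (x, -1) = c := by
  have := hp.isCancelSMul
  have := hp.continuous_const_smul
  obtain ⟨e, he⟩ := hp.surjective (F 0)
  obtain ⟨L, ⟨-, hL⟩, -⟩ := hp.isCoveringMap.existsUnique_continuousMap_lifts F 0 e he
  replace hL (q) : p (L q) = F q := congrFun hL q
  have htop (x x') : L (x, 1) = L (x', 1) :=
    hp.isCoveringMap.const_of_comp (g := fun x => L (x, 1)) (by fun_prop)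
      (fun x x' => by rw [hL, hL, (hedge x).1, (hedge x').1]) x x'
  have hbot (x x') : L (x, -1) = L (x', -1) :=
    hp.isCoveringMap.const_of_comp (g := fun x => L (x, -1)) (by fun_prop)
      (fun x x' => by rw [hL, hL, (hedge x).2, (hedge x').2]) x x'
  obtain ⟨h, hh⟩ : ∃ h : G, h • L (0, 0) = L (1, -0) :=
    hp.apply_eq_iff_mem_orbit.1 (by rw [hL, hL, hseam])
  have hdeck : (fun y : ℝ => L (1, -y)) = fun y => h • L (0, y) := by
    refine hp.isCoveringMap.eq_of_comp_eq (by fun_prop) (by fun_prop) (funext fun y => ?_) 0 hh.symm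
    exact ((hL _).trans (hseam y)).trans ((hL _).symm.trans (hp.map_smul h).symm)
  replace hdeck (y) : L (1, -y) = h • L (0, y) := congrFun hdeck y
  -- The edge of the strip closes up after two turns, so that `h ^ 2` fixes its lift.
  have hsq : (h * h) • L (0, 1) = (1 : G) • L (0, 1) := by
    rw [mul_smul, ← hdeck, hbot 1 0, ← hdeck, neg_neg, htop 1 0, one_smul]
  have hone : h = 1 := IsMulTorsionFree.pow_left_injective two_ne_zero <| by
    simpa [sq] using IsCancelSMul.right_cancel _ _ _ hsq
  simp only [hone, one_smul] at hdeck
  exact ⟨L, hL, hdeck, L (0, 1), fun x => ⟨htop x 0, (hbot x 1).trans (hdeck 1)⟩⟩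

theorem exists_lift_of_const_on_boundary [IsMulTorsionFree G] (hp : IsQuotientCoveringMap p G)
    (F : C(M, B)) {a : B} (hF : ∀ m, absHeight m = 1 → F m = a) :
    ∃ L : C(M, E), (∀ m, p (L m) = F m) ∧ ∃ c, ∀ m, absHeight m = 1 → L m = c := by
  obtain ⟨L, hL, hseam, c, hc⟩ := exists_lift_strip hp (F.comp bandChart) (a := a)
    (fun x => ⟨hF _ (by simp [absHeight_bandChart]), hF _ (by simp [absHeight_bandChart])⟩)
    fun y => congrArg F (bandChart_seam y)
  have hrel (q r : Sq) (h : rel q r) : L q = L r := by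
    obtain ⟨⟨x, y⟩, hq⟩ := q
    obtain ⟨⟨x', y'⟩, hr⟩ := r
    rcases h with h | ⟨rfl, rfl, rfl⟩ | ⟨rfl, rfl, rfl⟩
    · exact congrArg L h
    · simpa using (hseam (-y')).symm
    · simpa using hseam (-y)
  refine ⟨⟨Quot.lift (fun q : Sq => L q) hrel, continuous_quot_lift _ (by fun_prop)⟩, ?_, c, ?_⟩
  · rintro ⟨q⟩
    exact (hL q).trans (congrArg F (bandChart_of_mem q))
  · rintro ⟨⟨x, y⟩, hq⟩ (hy : |y| = 1)
    rcases (abs_eq zero_le_one).1 hy with rfl | rfl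
    exacts [(hc x).1, (hc x).2]

theorem exists_extension_of_const_on_C2 (F : C(X, B)) {b : B} (hF : ∀ x ∈ C2, F x = b) :
    ∃ F' : C(M, B), (∀ x : X, F' x = F x) ∧ ∀ m, holeDist m ≤ 1 / 4 → F' m = b := by
  classical
  let f (m : M) : B := if h : m ∈ Xset then F ⟨m, h⟩ else b
  have hfX (x : X) : f x = F x := dif_pos x.2
  have hfb (m) (hm : holeDist m ≤ 1 / 4) : f m = b := by
    by_cases h : m ∈ Xset
    · exact (hfX ⟨m, h⟩).trans (hF _ (mem_C2_iff.2 (hm.antisymm (mem_Xset_iff.1 h))))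
    · exact dif_neg h
  have hfc : ContinuousOn f (Xset ∪ {m | holeDist m ≤ 1 / 4}) := by
    refine ContinuousOn.union_of_isClosed ?_ ?_ ?_ (isClosed_le (by fun_prop) continuous_const)
    · rw [continuousOn_iff_continuous_domRestrict]
      exact F.continuous.congr fun x => (hfX x).symm
    · exact continuousOn_const.congr hfb
    · rw [show Xset = {m | 1 / 4 ≤ holeDist m} from ext fun _ => mem_Xset_iff]
      exact isClosed_le continuous_const (by fun_prop)
  have hcover : Xset ∪ {m | holeDist m ≤ 1 / 4} = univ :=
    eq_univ_of_forall fun m => (le_total _ _).imp_left mem_Xset_iff.2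
  exact ⟨⟨f, continuousOn_univ.1 (hcover ▸ hfc)⟩, hfX, hfb⟩

/-- The maps which are constant on each of the two boundary circles. -/
def ConstOnCircles {Z : Type*} (f : X → Z) : Prop :=
  (∃ a, ∀ x ∈ C1, f x = a) ∧ ∃ b, ∀ x ∈ C2, f x = b

theorem ConstOnCircles.exists_lift [IsMulTorsionFree G] (hp : IsQuotientCoveringMap p G)
    {F : C(X, B)} (hF : ConstOnCircles F) :
    ∃ L : C(X, E), (∀ x, p (L x) = F x) ∧ ConstOnCircles L := by
  obtain ⟨⟨a, ha⟩, b, hb⟩ := hF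
  obtain ⟨F', hF', hF'b⟩ := exists_extension_of_const_on_C2 F hb
  have hF'a (m) (hm : absHeight m = 1) : F' m = a := by
    have hmX : m ∈ Xset := mem_Xset_iff.2 (by linarith [absHeight_le_holeDist m])
    exact (hF' ⟨m, hmX⟩).trans (ha _ (mem_C1_iff.2 hm))
  obtain ⟨L, hL, c, hc⟩ := exists_lift_of_const_on_boundary hp F' hF'a
  obtain ⟨x₀, hx₀⟩ := C2_nonempty
  refine ⟨⟨fun x => L x, by fun_prop⟩, fun x => (hL x).trans (hF' x),
    ⟨c, fun x hx => hc x (mem_C1_iff.1 hx)⟩, L x₀, fun x hx => ?_⟩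
  exact hp.isCoveringMap.constOn_of_comp isPreconnected_setOf_holeDist_le L.continuous.continuousOn
    (fun m hm m' hm' => by rw [hL, hL, hF'b m hm, hF'b m' hm']) (mem_C2_iff.1 hx).le
    (mem_C2_iff.1 hx₀).le

end Lifting

/-! ### The fixed point -/

theorem ConstOnCircles.comp {Z W : Type*} {f : X → Z} (hf : ConstOnCircles f) (g : Z → W) :
    ConstOnCircles fun x => g (f x) := by
  obtain ⟨⟨a, ha⟩, b, hb⟩ := hf
  exact ⟨⟨g a, fun x hx => congrArg g (ha x hx)⟩, g b, fun x hx => congrArg g (hb x hx)⟩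

theorem ConstOnCircles.homotopicWith_const {f : C(X, X)} (hf : ConstOnCircles f) :
    ∃ c, f.HomotopicWith (ContinuousMap.const X c) (fun k => ConstOnCircles k) := by
  obtain ⟨i, e, ⟨H⟩, hdevelop⟩ := exists_homotopic_id_eq_develop
  obtain ⟨L, hL, L_const⟩ :=
    ConstOnCircles.exists_lift isQuotientCoveringMap_toRose (F := i.comp f) (hf.comp i)
  refine ⟨develop spineLoop (root Bool), ContinuousMap.HomotopicWith.trans (g := e.comp f) ?_ ?_⟩
  · exact ⟨⟨⟨⟨fun q => H (q.1, f q.2), by fun_prop⟩, fun x => H.map_zero_left _,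
      fun x => H.map_one_left _⟩, fun s => hf.comp fun x => H (s, x)⟩⟩
  · refine ⟨⟨⟨⟨fun q => develop spineLoop (contract q.1 (L q.2)), ?_⟩, fun x => ?_, fun x => ?_⟩,
      fun s => L_const.comp fun ξ => develop spineLoop (contract s ξ)⟩⟩
    · exact (continuous_develop _).comp
        (continuous_contract.comp (continuous_fst.prodMk (L.continuous.comp continuous_snd)))
    · exact (congrArg _ (contract_zero _)).trans (hdevelop _ _ (hL x))
    · exact congrArg (develop spineLoop) (contract_one _)

theorem isClopen_C1_in_Bd : IsClopen (Subtype.val ⁻¹' C1 : Set Bd) :=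
  isClopen_preimage_coe_of_subset_union isClosed_C1 isClosed_C2 disjoint_C1_C2 subset_rfl

theorem isClopen_C2_in_Bd : IsClopen (Subtype.val ⁻¹' C2 : Set Bd) :=
  isClopen_preimage_coe_of_subset_union isClosed_C2 isClosed_C1 disjoint_C1_C2.symm
    (union_comm C1 C2).subset

theorem exists_homotopicWith_const_on_circles {f : C(X, X)} (h12 : MapsTo f C1 C2)
    (h21 : MapsTo f C2 C1)
    (h1 : Inessential (restrictMap f (h12.mono_right subset_union_right : MapsTo f C1 Bd)))
    (h2 : Inessential (restrictMap f (h21.mono_right subset_union_left : MapsTo f C2 Bd))) :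
    ∃ g : C(X, X), f.HomotopicWith g (fun k => MapsTo k Bd Bd) ∧
      (∃ a ∈ C2, ∀ x ∈ C1, g x = a) ∧ ∃ b ∈ C1, ∀ x ∈ C2, g x = b := by
  obtain ⟨a, H₁⟩ := h1
  obtain ⟨b, H₂⟩ := h2
  have ha : (a : X) ∈ C2 := by
    obtain ⟨x₁, hx₁⟩ := C1_nonempty
    exact mem_of_homotopic_const (S := Subtype.val ⁻¹' C2) (y := ⟨x₁, hx₁⟩) H₁
      isClopen_C2_in_Bd (h12 hx₁)
  have hb : (b : X) ∈ C1 := by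
    obtain ⟨x₂, hx₂⟩ := C2_nonempty
    exact mem_of_homotopic_const (S := Subtype.val ⁻¹' C1) (y := ⟨x₂, hx₂⟩) H₂
      isClopen_C1_in_Bd (h21 hx₂)
  obtain ⟨H₁⟩ := H₁
  obtain ⟨H₂⟩ := H₂
  have : Nonempty X := ⟨a⟩
  obtain ⟨K, hK, K_C1, K_C2⟩ := exists_continuousOn_union isClosed_C1 isClosed_C2 disjoint_C1_C2
    (⟨fun q => (H₁ q : X), by fun_prop⟩ : C(unitInterval × C1, X))
    (⟨fun q => (H₂ q : X), by fun_prop⟩ : C(unitInterval × C2, X))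
  have K_zero : ∀ x ∈ Bd, K (0, x) = f x := by
    rintro x (hx | hx)
    · exact (K_C1 0 ⟨x, hx⟩).trans (congrArg Subtype.val (H₁.map_zero_left _))
    · exact (K_C2 0 ⟨x, hx⟩).trans (congrArg Subtype.val (H₂.map_zero_left _))
  have K_mem : ∀ s, ∀ x ∈ Bd, K (s, x) ∈ Bd := by
    rintro s x (hx | hx)
    · exact (K_C1 s ⟨x, hx⟩).symm ▸ (H₁ _).2
    · exact (K_C2 s ⟨x, hx⟩).symm ▸ (H₂ _).2
  obtain ⟨N, -⟩ := exists_ndrData_Bd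
  obtain ⟨g, hfg, hg⟩ :=
    N.exists_homotopicWith_mapsTo (isClosed_C1.union isClosed_C2) f hK K_zero K_mem
  refine ⟨g, hfg, ⟨a, ha, fun x hx => ?_⟩, b, hb, fun x hx => ?_⟩
  · exact (hg x (Or.inl hx)).trans
      ((K_C1 1 ⟨x, hx⟩).trans (congrArg Subtype.val (H₁.map_one_left _)))
  · exact (hg x (Or.inr hx)).trans
      ((K_C2 1 ⟨x, hx⟩).trans (congrArg Subtype.val (H₂.map_one_left _)))

theorem ConstOnCircles.exists_homotopicRel_comp_collarCoord {f : C(X, X)} (hf : ConstOnCircles f) :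
    ∃ φ : C(ℝ, X), f.HomotopicRel (φ.comp collarCoord) Bd := by
  obtain ⟨c, ⟨K⟩⟩ := hf.homotopicWith_const
  obtain ⟨N, N_height, hneg, hpos⟩ := exists_ndrData_Bd
  obtain ⟨x₁, hx₁⟩ := C1_nonempty
  obtain ⟨x₂, hx₂⟩ := C2_nonempty
  let time (t : ℝ) : unitInterval := projIcc 0 1 zero_le_one (1 - |t|)
  have time_collarCoord (x) : time (collarCoord x) = N.height x :=
    (congrArg _ (N_height x).symm).trans (projIcc_val _ _)
  let φ : C(ℝ, X) := ⟨fun t => if t ≤ 0 then K (time t, x₁) else K (time t, x₂),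
    Continuous.if_le (by fun_prop) (by fun_prop) continuous_id continuous_const fun t ht => by
      have h1 : time t = 1 := by simp [time, ht]
      rw [h1, K.apply_one, K.apply_one]
      rfl⟩
  have φ_collarCoord (x) : φ (collarCoord x) = K (N.height x, N.push (1, x)) := by
    obtain ⟨⟨a, ha⟩, b, hb⟩ := K.prop (N.height x)
    rcases lt_trichotomy (collarCoord x) 0 with h | h | h
    · refine (if_pos h.le).trans ?_
      rw [time_collarCoord]
      exact (ha x₁ hx₁).trans (ha _ (hneg x h)).symm
    · have h1 : N.height x = 1 := Subtype.ext (by simp [N_height, h])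
      refine (if_pos h.le).trans ?_
      rw [time_collarCoord, h1, K.apply_one, K.apply_one]
      rfl
    · refine (if_neg h.not_ge).trans ?_
      rw [time_collarCoord]
      exact (hb x₂ hx₂).trans (hb _ (hpos x h)).symm
  have hN := N.homotopicRel_of_homotopy f K.toContinuousMap K.apply_zero
  exact ⟨φ, by convert hN using 1; exact ContinuousMap.ext φ_collarCoord⟩

theorem homotopicRel_comp_of_eqOn {Y Z : Type*} [TopologicalSpace Y] [TopologicalSpace Z]
    {A : Set Y} (φ : C(ℝ, Z)) {u v : C(Y, ℝ)} (h : EqOn u v A) :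
    (φ.comp u).HomotopicRel (φ.comp v) A := by
  have huv : u.HomotopicRel v A := ⟨⟨.affine u v, fun t y hy => by
    simp [ContinuousMap.Homotopy.affine, h hy]⟩⟩
  exact huv.comp_continuousMap φ

/-- A function on `X` which takes the same values `-1` on `C1` and `1` on `C2` as `collarCoord`,
but depends on the height alone. -/
noncomputable def heightCoord : C(X, ℝ) :=
  ⟨fun x => min 1 (3 - 4 * absHeight x), by fun_prop⟩

theorem heightCoord_le_one (x : X) : heightCoord x ≤ 1 := min_le_left _ _

theorem heightCoord_of_mem_C1 {x : X} (hx : x ∈ C1) : heightCoord x = -1 := by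
  norm_num [heightCoord, mem_C1_iff.1 hx]

theorem absHeight_le_quarter_of_mem_C2 {x : X} (hx : x ∈ C2) : absHeight x ≤ 1 / 4 :=
  (absHeight_le_holeDist _).trans_eq (mem_C2_iff.1 hx)

theorem heightCoord_of_absHeight_le {x : X} (hx : absHeight x ≤ 1 / 2) : heightCoord x = 1 :=
  min_eq_left (by linarith)

theorem heightCoord_of_mem_C2 {x : X} (hx : x ∈ C2) : heightCoord x = 1 :=
  heightCoord_of_absHeight_le ((absHeight_le_quarter_of_mem_C2 hx).trans (by norm_num))

theorem eqOn_collarCoord_heightCoord : EqOn collarCoord heightCoord Bd := by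
  rintro x (hx | hx)
  · rw [collarCoord_of_mem_C1 hx, heightCoord_of_mem_C1 hx]
  · rw [collarCoord_of_mem_C2 hx, heightCoord_of_mem_C2 hx]

theorem exists_homotopicRel_comp_heightCoord {φ : C(ℝ, X)} (hφ : φ (-1) ∈ C2) (hφ' : φ 1 ∈ C1) :
    ∃ ψ : C(ℝ, X), (φ.comp heightCoord).HomotopicRel (ψ.comp heightCoord) Bd ∧
      (∀ t ≤ 0, absHeight (ψ t) ≤ 1 / 2) ∧
        ∀ t ∈ Icc (0 : ℝ) 1, absHeight (ψ t) = (1 + t) / 2 := by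
  obtain ⟨D, D_zero, hD⟩ := exists_lowering
  let time (t : ℝ) : unitInterval := projIcc 0 1 zero_le_one (1 - t)
  have time_one : time 1 = 0 := projIcc_of_le_left _ (by norm_num)
  have time_of_nonpos {t : ℝ} (ht : t ≤ 0) : time t = 1 := projIcc_of_right_le _ (by linarith)
  -- On `[-1, 0]` the map `φ` is traversed at double speed and lowered, which leaves `[0, 1]` for
  -- raising the lowered `φ 1` back into `C1`.
  let Ψ : C(unitInterval × ℝ, X) :=
    ⟨fun q => D (q.1 * time q.2, φ (min 1 ((1 + q.1) * q.2 + q.1))), by fun_prop⟩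
  refine ⟨⟨fun t => Ψ (1, t), by fun_prop⟩, ⟨⟨⟨⟨fun q => Ψ (q.1, heightCoord q.2), by fun_prop⟩,
    fun x => ?_, fun x => rfl⟩, fun s x hx => ?_⟩⟩, fun t ht => ?_, fun t ht => ?_⟩
  · simp [Ψ, D_zero, heightCoord_le_one x]
  · rcases hx with hx | hx
    · have hlow : absHeight (φ (-1)) ≤ 1 / 2 :=
        (absHeight_le_quarter_of_mem_C2 hφ).trans (by norm_num)
      simp [Ψ, heightCoord_of_mem_C1 hx, hD _ _ |>.1 hlow]
    · simp [Ψ, heightCoord_of_mem_C2 hx, time_one, D_zero, add_assoc, add_nonneg s.2.1 s.2.1]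
  · have hψ : Ψ (1, t) = D (1, φ (min 1 (2 * t + 1))) := by
      simp [Ψ, time_of_nonpos ht, one_add_one_eq_two]
    change absHeight (Ψ (1, t)) ≤ 1 / 2
    rw [hψ]
    rcases le_total (absHeight (φ (min 1 (2 * t + 1)))) (1 / 2) with h | h
    · rwa [(hD 1 _).1 h]
    · simp [(hD 1 _).2 h]
  · have htime : (time t : ℝ) = 1 - t := by
      simp [time, projIcc_of_mem zero_le_one (show 1 - t ∈ Icc (0 : ℝ) 1 by
        constructor <;> linarith [ht.1, ht.2])]
    have hψ : Ψ (1, t) = D (time t, φ 1) := by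
      simp [Ψ, ht.1, one_add_one_eq_two]
    have hheight := (hD (time t) (φ 1)).2 (by norm_num [mem_C1_iff.1 hφ'])
    change absHeight (Ψ (1, t)) = (1 + t) / 2
    rw [hψ, hheight, htime, mem_C1_iff.1 hφ']
    ring

theorem fixedPoints_heightCoord_comp {ψ : C(ℝ, X)} (hlow : ∀ t ≤ 0, absHeight (ψ t) ≤ 1 / 2)
    (hrise : ∀ t ∈ Icc (0 : ℝ) 1, absHeight (ψ t) = (1 + t) / 2) :
    Function.fixedPoints (heightCoord ∘ ψ) = {1 / 3} := by
  have heightCoord_of_mem {t : ℝ} (ht : t ∈ Icc (0 : ℝ) 1) : heightCoord (ψ t) = 1 - 2 * t := by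
    change min 1 (3 - 4 * absHeight (ψ t)) = _
    rw [hrise t ht, min_eq_right (by linarith [ht.1])]
    ring
  ext t
  refine ⟨fun (ht : heightCoord (ψ t) = t) => ?_, ?_⟩
  · rcases le_total t 0 with h | h
    · rw [heightCoord_of_absHeight_le (hlow t h)] at ht
      linarith
    · rw [heightCoord_of_mem ⟨h, ht ▸ heightCoord_le_one _⟩] at ht
      exact mem_singleton_iff.2 (by linarith)
  · rintro rfl
    exact (heightCoord_of_mem (by norm_num)).trans (by norm_num)

theorem exists_fixedPoints_comp_heightCoord_eq_singleton {ψ : C(ℝ, X)}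
    (hlow : ∀ t ≤ 0, absHeight (ψ t) ≤ 1 / 2)
    (hrise : ∀ t ∈ Icc (0 : ℝ) 1, absHeight (ψ t) = (1 + t) / 2) :
    ∃ x₀, Function.fixedPoints (ψ ∘ heightCoord) = {x₀} ∧ x₀ ∉ Bd := by
  refine ⟨ψ (1 / 3), ?_, ?_⟩
  · rw [← (Function.bijOn_fixedPoints_comp heightCoord ψ).image_eq,
      fixedPoints_heightCoord_comp hlow hrise, image_singleton]
  · have h := hrise (1 / 3) (by norm_num)
    rintro (hC | hC)
    · norm_num [mem_C1_iff.1 hC] at h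
    · linarith [absHeight_le_quarter_of_mem_C2 hC]

/-- A boundary-inessential boundary-preserving map of the punctured Möbius band that
interchanges the two boundary circles is boundary-homotopic to a map with exactly one
fixed point, lying in the interior. -/
theorem stmt_4 (f : C(X, X)) (hf : BoundaryPreserving f)
    (h12 : MapsTo f C1 C2) (h21 : MapsTo f C2 C1)
    (h1 : Inessential (restrictMap f (h12.mono_right Set.subset_union_right : MapsTo f C1 Bd)))
    (h2 : Inessential (restrictMap f (h21.mono_right Set.subset_union_left : MapsTo f C2 Bd))) :
    ∃ g : C(X, X), BoundaryHomotopic f g ∧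
      ∃ x₀ : X, {x : X | g x = x} = {x₀} ∧ x₀ ∉ Bd := by
  obtain ⟨k, hfk, ⟨a, ha, k_C1⟩, b, hb, k_C2⟩ := exists_homotopicWith_const_on_circles h12 h21 h1 h2
  obtain ⟨φ, hkφ⟩ :=
    ConstOnCircles.exists_homotopicRel_comp_collarCoord ⟨⟨a, k_C1⟩, b, k_C2⟩
  have hk : MapsTo k Bd Bd := by
    rintro x (hx | hx)
    exacts [k_C1 x hx ▸ Or.inr ha, k_C2 x hx ▸ Or.inl hb]
  replace hkφ := hkφ.trans (homotopicRel_comp_of_eqOn φ eqOn_collarCoord_heightCoord)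
  have hφ : φ (-1) ∈ C2 := by
    obtain ⟨x, hx⟩ := C1_nonempty
    rw [← heightCoord_of_mem_C1 hx]
    exact (hkφ.fst_eq_snd (Or.inl hx)).symm.trans (k_C1 x hx) ▸ ha
  have hφ' : φ 1 ∈ C1 := by
    obtain ⟨x, hx⟩ := C2_nonempty
    rw [← heightCoord_of_mem_C2 hx]
    exact (hkφ.fst_eq_snd (Or.inr hx)).symm.trans (k_C2 x hx) ▸ hb
  obtain ⟨ψ, hφψ, hlow, hrise⟩ := exists_homotopicRel_comp_heightCoord hφ hφ'
  obtain ⟨H⟩ := hfk.trans (homotopicWith_mapsTo_of_homotopicRel (hkφ.trans hφψ) hk)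
  exact ⟨ψ.comp heightCoord, ⟨H.toHomotopy, fun x hx t => H.prop t hx⟩,
    exists_fixedPoints_comp_heightCoord_eq_singleton hlow hrise⟩

end PMB
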